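/- arXiv:1701.01314 — 2 statements merged into one kernel-verified Lean document; each statement's English description precedes it below -/
import Mathlib

section
/- Let k be a field and X a ring scheme over k whose underlying scheme is of finite type over k and whose underlying topological space is connected. Then X is an affine scheme. (Theorem 2.4 of the paper.) -/
open AlgebraicGeometry CategoryTheory

/-!
Suppose first that `k` is algebraically closed. Write `A = Spec Γ(X, 𝒪_X)`, and let `y` be a
rational point with the same image in `A` as `0`. If `T → X` is an infinitesimal neighbourhood of
`0`, then `(x, t) ↦ x * t` maps `X × T` into an affine open neighbourhood of `0`, so it factors
through `A × T`; hence `y` kills `T`. By Krull's intersection theorem, `y` kills a neighbourhood of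
`0`. The annihilator of `y` is then an open and closed subgroup, so it contains `1`, and `y = 0`.

Therefore `X → A` is injective on closed points, hence quasi-finite, and `X` is quasi-affine by
Zariski's main theorem. The addition of `X` extends to `A`, in which `X` is open and dense. Given a
point `c` of `A`, density provides a point `x` of `X` with `c - x` in `X`, so `c = (c - x) + x` lies
in `X`, and `X = A`.

Over an arbitrary field, `X` remains connected over the algebraic closure because it has the
rational point `0`, and affineness descends along the field extension.
-/

universe u

namespace RingScheme

open Limits MonoidalCategory CartesianMonoidalCategory Topology

section Extension

variable {Y Z U : Scheme.{u}} [IsAffine U] (g : Y ⟶ Z) [IsIso g.appTop]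

theorem eq_of_comp_eq_of_isIso_appTop {a b : Z ⟶ U} (h : g ≫ a = g ≫ b) : a = b := by
  apply ext_of_isAffine
  simpa only [Scheme.Hom.comp_appTop, cancel_mono] using congr(($h).appTop)

theorem exists_comp_eq_of_isIso_appTop (c : Y ⟶ U) : ∃ d : Z ⟶ U, g ≫ d = c := by
  refine ⟨Z.toSpecΓ ≫ Spec.map (c.appTop ≫ inv g.appTop) ≫ U.isoSpec.inv, ?_⟩
  rw [Scheme.toSpecΓ_naturality_assoc, ← Spec.map_comp_assoc, Category.assoc, IsIso.inv_hom_id,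
    Category.comp_id, ← Scheme.toSpecΓ_naturality_assoc]
  simp [Scheme.isoSpec]

theorem isDominant_of_isIso_appTop [IsAffine Z] [CompactSpace Y] : IsDominant g := by
  have hg : g = Y.toSpecΓ ≫ Spec.map g.appTop ≫ Z.isoSpec.inv := by
    rw [← Scheme.toSpecΓ_naturality_assoc]
    simp [Scheme.isoSpec]
  rw [hg]
  infer_instance

theorem isIso_of_isIso_appTop [IsAffine Y] [IsAffine Z] : IsIso g := by
  have : IsIso (g ≫ Z.toSpecΓ) := by
    rw [Scheme.toSpecΓ_naturality]
    infer_instance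
  exact IsIso.of_isIso_comp_right g Z.toSpecΓ

end Extension

section OverExtension

variable {S : Scheme.{u}} {Y Z U : Over S} [IsAffine U.left] (g : Y ⟶ Z) [IsIso g.left.appTop]

theorem over_eq_of_comp_eq_of_isIso_appTop {a b : Z ⟶ U} (h : g ≫ a = g ≫ b) : a = b := by
  ext1
  exact eq_of_comp_eq_of_isIso_appTop g.left congr(($h).left)

theorem over_exists_comp_eq_of_isIso_appTop [IsAffine S] (c : Y ⟶ U) :
    ∃ d : Z ⟶ U, g ≫ d = c := by
  obtain ⟨d, hd⟩ := exists_comp_eq_of_isIso_appTop g.left c.left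
  refine ⟨Over.homMk d (eq_of_comp_eq_of_isIso_appTop g.left ?_), by ext1; exact hd⟩
  rw [reassoc_of% hd, Over.w, Over.w]

instance isIso_id_left_appTop (Y : Over S) : IsIso (𝟙 Y : Y ⟶ Y).left.appTop :=
  inferInstanceAs (IsIso ((𝟙 Y.left : Y.left ⟶ Y.left).app ⊤))

end OverExtension

theorem over_exists_comp_eq_of_range_subset {S : Scheme.{u}} {Y Z U : Over S} (j : U ⟶ Z)
    [IsOpenImmersion j.left] (g : Y ⟶ Z) (h : Set.range g.left ⊆ Set.range j.left) :
    ∃ g' : Y ⟶ U, g' ≫ j = g := by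
  have hfac := IsOpenImmersion.lift_fac j.left g.left h
  exact ⟨Over.homMk (IsOpenImmersion.lift j.left g.left h)
    (by rw [← Over.w j, reassoc_of% hfac, Over.w]), by ext1; exact hfac⟩

section Affinization

variable {S : Scheme.{u}} [IsAffine S]

/-- The affinization `Spec Γ(X, 𝒪_X)` of a scheme `X` over an affine base `S`, as a scheme
over `S`. -/
noncomputable def affinization (X : Over S) : Over S :=
  Over.mk (Spec.map X.hom.appTop ≫ S.isoSpec.inv)

instance (X : Over S) : IsAffine (affinization X).left :=
  inferInstanceAs (IsAffine (Spec _))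

/-- The canonical morphism from a scheme over an affine base to its affinization. -/
noncomputable def toAffinization (X : Over S) : X ⟶ affinization X :=
  Over.homMk X.left.toSpecΓ
    (by simp [affinization, ← Scheme.toSpecΓ_naturality_assoc, Scheme.isoSpec])

instance (X : Over S) : IsIso (toAffinization X).left.appTop := by
  have : IsIso X.left.toSpecΓ.appTop := by
    rw [Scheme.toSpecΓ_appTop]
    infer_instance
  exact this

end Affinization

section Field

variable {k : Type u} [Field k]

theorem isPushout_appTop_of_isPullback {X Y Z : Scheme.{u}} {g : Y ⟶ X} {iY : Y ⟶ Z}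
    {iX : X ⟶ Spec (.of k)} {f : Z ⟶ Spec (.of k)} (H : IsPullback g iY iX f)
    [CompactSpace X] [QuasiSeparatedSpace X] [CompactSpace Z] [QuasiSeparatedSpace Z] :
    IsPushout iX.appTop f.appTop g.appTop iY.appTop := by
  have hflat : (iX.appLE ⊤ ⊤ le_top).hom.Flat :=
    .of_isField (isField_of_isIntegral_of_subsingleton _) _
  have hpush := (isIso_pushoutSection_iff _ _ _ _).mp
    (isIso_pushoutSection_of_isCompact_of_flat_right_of_ringHomFlat (US := ⊤) (UT := ⊤)
      (UX := ⊤) (UY := ⊤) H le_top le_top (by simp) (isAffineOpen_top _) isCompact_univ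
      isQuasiSeparated_univ isCompact_univ isQuasiSeparated_univ hflat)
  have happ {A B : Scheme.{u}} (h : A ⟶ B) : h.appLE ⊤ ⊤ le_top = h.appTop :=
    h.appLE_eq_app
  exact happ iX ▸ happ f ▸ happ g ▸ happ iY ▸ hpush

instance {Y₁ Z₁ Y₂ Z₂ : Over (Spec (.of k))} (g₁ : Y₁ ⟶ Z₁) (g₂ : Y₂ ⟶ Z₂)
    [CompactSpace Y₁.left] [QuasiSeparatedSpace Y₁.left]
    [CompactSpace Z₁.left] [QuasiSeparatedSpace Z₁.left]
    [CompactSpace Y₂.left] [QuasiSeparatedSpace Y₂.left]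
    [CompactSpace Z₂.left] [QuasiSeparatedSpace Z₂.left]
    [IsIso g₁.left.appTop] [IsIso g₂.left.appTop] : IsIso (g₁ ⊗ₘ g₂).left.appTop := by
  have hY := isPushout_appTop_of_isPullback (IsPullback.of_hasPullback Y₁.hom Y₂.hom)
  have hZ := isPushout_appTop_of_isPullback (IsPullback.of_hasPullback Z₁.hom Z₂.hom)
  have hfst : (g₁ ⊗ₘ g₂).left ≫ pullback.fst Z₁.hom Z₂.hom =
      pullback.fst Y₁.hom Y₂.hom ≫ g₁.left := congr(($(tensorHom_fst g₁ g₂)).left)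
  have hsnd : (g₁ ⊗ₘ g₂).left ≫ pullback.snd Z₁.hom Z₂.hom =
      pullback.snd Y₁.hom Y₂.hom ≫ g₂.left := congr(($(tensorHom_snd g₁ g₂)).left)
  have hZY : IsPushout Z₁.hom.appTop Z₂.hom.appTop
      (g₁.left.appTop ≫ (pullback.fst Y₁.hom Y₂.hom).appTop)
      (g₂.left.appTop ≫ (pullback.snd Y₁.hom Y₂.hom).appTop) := by
    refine hY.of_iso (.refl _) (asIso g₁.left.appTop).symm (asIso g₂.left.appTop).symm (.refl _)
      ?_ ?_ (by simp) (by simp)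
    all_goals rw [Iso.refl_hom, Category.id_comp, Iso.symm_hom, asIso_inv, IsIso.comp_inv_eq,
      ← Scheme.Hom.comp_appTop, Over.w]
  rw [← Scheme.Hom.comp_appTop, ← Scheme.Hom.comp_appTop, ← hfst, ← hsnd,
    Scheme.Hom.comp_appTop, Scheme.Hom.comp_appTop] at hZY
  have hiso : (g₁ ⊗ₘ g₂).left.appTop = (hZ.isoIsPushout _ _ hZY).hom :=
    hZ.hom_ext (hZ.inl_isoIsPushout_hom ..).symm (hZ.inr_isoIsPushout_hom ..).symm
  rw [hiso]
  infer_instance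

end Field

section Points

section ResiduePoint

variable {S : Scheme.{u}}

/-- The spectrum of the residue field of `Y` at `p`, as a scheme over the base of `Y`. -/
noncomputable def residuePoint (Y : Over S) (p : Y.left) : Over S :=
  Over.mk (Y.left.fromSpecResidueField p ≫ Y.hom)

/-- The canonical morphism from the spectrum of the residue field of `Y` at `p` to `Y`. -/
noncomputable def fromResiduePoint (Y : Over S) (p : Y.left) : residuePoint Y p ⟶ Y :=
  Over.homMk (Y.left.fromSpecResidueField p)

instance (Y : Over S) (p : Y.left) : Nonempty (residuePoint Y p).left :=
  inferInstanceAs (Nonempty (Spec _))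

instance (Y : Over S) (p : Y.left) : IsReduced (residuePoint Y p).left :=
  inferInstanceAs (IsReduced (Spec _))

instance (Y : Over S) (p : Y.left) : IsAffine (residuePoint Y p).left :=
  inferInstanceAs (IsAffine (Spec _))

theorem fromResiduePoint_comp_left_apply {Y Z : Over S} (p : Y.left) (g : Y ⟶ Z)
    (t : (residuePoint Y p).left) : (fromResiduePoint Y p ≫ g).left t = g.left p := by
  rw [Over.comp_left, Scheme.Hom.comp_apply]
  exact congrArg g.left (Scheme.fromSpecResidueField_apply _ _)

end ResiduePoint

theorem exists_comp_eq_of_isReduced_of_range_subset {Q C X : Scheme.{u}} [IsReduced Q] (q : Q ⟶ X)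
    (c : C ⟶ X) [IsClosedImmersion c] (h : Set.range q ⊆ Set.range c) :
    ∃ l : Q ⟶ C, l ≫ c = q := by
  have : Surjective (pullback.fst q c) := by
    refine ⟨fun x ↦ ?_⟩
    obtain ⟨y, hy⟩ := h ⟨x, rfl⟩
    obtain ⟨z, hz, -⟩ := Scheme.Pullback.exists_preimage_pullback (f := q) (g := c) x y hy.symm
    exact ⟨z, hz⟩
  have : IsIso (pullback.fst q c) := isIso_of_isClosedImmersion_of_surjective _
  exact ⟨inv (pullback.fst q c) ≫ pullback.snd q c, by
    rw [Category.assoc, ← pullback.condition, IsIso.inv_hom_id_assoc]⟩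

variable {k : Type u} [Field k] {X Y : Over (Spec (.of k))}

theorem isClosedImmersion_left_of_unit (x : 𝟙_ (Over (Spec (.of k))) ⟶ X) :
    IsClosedImmersion x.left :=
  isClosedImmersion_of_comp_eq_id X.hom x.left (Over.w x)

/-- The point of `X` underlying a `k`-rational point `Spec k ⟶ X`. -/
noncomputable def imagePoint (x : 𝟙_ (Over (Spec (.of k))) ⟶ X) : X.left :=
  x.left (IsLocalRing.closedPoint k)

theorem left_apply_eq_imagePoint (x : 𝟙_ (Over (Spec (.of k))) ⟶ X)
    (t : (𝟙_ (Over (Spec (.of k)))).left) : x.left t = imagePoint x :=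
  congrArg x.left (Subsingleton.elim (α := Spec (.of k)) _ _)

theorem toUnit_comp_left_apply (x : 𝟙_ (Over (Spec (.of k))) ⟶ X) (t : Y.left) :
    (toUnit Y ≫ x).left t = imagePoint x :=
  left_apply_eq_imagePoint x _

theorem imagePoint_comp (x : 𝟙_ (Over (Spec (.of k))) ⟶ X) (f : X ⟶ Y) :
    imagePoint (x ≫ f) = f.left (imagePoint x) :=
  rfl

theorem eq_toUnit_comp_of_forall_left_apply_eq [IsReduced Y.left] (q : Y ⟶ X)
    (x : 𝟙_ (Over (Spec (.of k))) ⟶ X) (h : ∀ t, q.left t = imagePoint x) :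
    q = toUnit Y ≫ x := by
  have := isClosedImmersion_left_of_unit x
  obtain ⟨l, hl⟩ := exists_comp_eq_of_isReduced_of_range_subset q.left x.left
    (by rintro _ ⟨t, rfl⟩; exact ⟨_, (h t).symm⟩)
  have hw : l ≫ (𝟙_ (Over (Spec (.of k)))).hom = Y.hom := by
    rw [← Over.w x, reassoc_of% hl, Over.w]
  rw [toUnit_unique (toUnit Y) (Over.homMk l hw)]
  ext1
  exact hl.symm

theorem fromResiduePoint_comp_eq_toUnit_comp_iff {p : Y.left} {g : Y ⟶ X}
    {x : 𝟙_ (Over (Spec (.of k))) ⟶ X} :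
    fromResiduePoint Y p ≫ g = toUnit _ ≫ x ↔ g.left p = imagePoint x := by
  constructor
  · intro h
    obtain ⟨t⟩ : Nonempty (residuePoint Y p).left := inferInstance
    rw [← fromResiduePoint_comp_left_apply p g t, h, toUnit_comp_left_apply]
  · intro h
    refine eq_toUnit_comp_of_forall_left_apply_eq _ _ fun t ↦ ?_
    rw [fromResiduePoint_comp_left_apply, h]

end Points

section Group

open scoped AddMonObj

theorem isPullback_lift_id_id_sub {C : Type*} [Category* C] [CartesianMonoidalCategory C]
    (G : C) [AddGrpObj G] :
    IsPullback (lift (𝟙 G) (𝟙 G)) (toUnit G) (fst G G - snd G G) (0 : 𝟙_ C ⟶ G) := by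
  refine ⟨⟨?_⟩, ⟨PullbackCone.IsLimit.mk _ (fun s ↦ s.fst ≫ fst _ _) ?_ ?_ ?_⟩⟩
  · simp [AddGrpObj.comp_sub]
  · intro s
    have hs : s.fst ≫ fst G G = s.fst ≫ snd G G := by
      simpa [AddGrpObj.comp_sub, sub_eq_zero] using s.condition
    ext1 <;> simp [hs]
  · exact fun s ↦ toUnit_unique _ _
  · intro s m hm _
    simp [← hm]

variable {k : Type u} [Field k] {X Y : Over (Spec (.of k))} [AddGrpObj X]

instance isSeparated_hom_of_addGrpObj : IsSeparated X.hom where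
  isClosedImmersion_diagonal :=
    have := isClosedImmersion_left_of_unit (0 : 𝟙_ (Over (Spec (.of k))) ⟶ X)
    MorphismProperty.of_isPullback (P := @IsClosedImmersion)
      ((isPullback_lift_id_id_sub X).map (Over.forget _)).flip this

instance quasiSeparatedSpace_left_of_addGrpObj : QuasiSeparatedSpace X.left :=
  quasiSeparatedSpace_of_quasiSeparated X.hom

variable (X) in
/-- The zero of a group scheme over `k`, as a point of the underlying space. -/
noncomputable abbrev zeroPoint : X.left :=
  imagePoint (0 : 𝟙_ (Over (Spec (.of k))) ⟶ X)

theorem zero_left_apply (t : Y.left) :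
    (0 : Y ⟶ X).left t = zeroPoint X := by
  rw [← AddMonObj.comp_zero (toUnit Y), toUnit_comp_left_apply]

theorem fromResiduePoint_comp_eq_zero_iff {p : Y.left} {g : Y ⟶ X} :
    fromResiduePoint Y p ≫ g = 0 ↔ g.left p = zeroPoint X := by
  rw [← fromResiduePoint_comp_eq_toUnit_comp_iff, AddMonObj.comp_zero]

end Group

section InfinitesimalNeighborhood

variable {R : CommRingCat.{u}} [IsLocalRing R] {X : Scheme.{u}}

theorem exists_specMap_comp_fromSpecStalk_eq (g : Spec R ⟶ X) {x : X}
    (hx : g (IsLocalRing.closedPoint R) = x) :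
    ∃ φ : X.presheaf.stalk x ⟶ R, Spec.map φ ≫ X.fromSpecStalk x = g := by
  subst hx
  exact ⟨Scheme.stalkClosedPointTo g, Scheme.Spec_stalkClosedPointTo_fromSpecStalk g⟩

variable (R) in
/-- The inclusion of the `n`-th infinitesimal neighbourhood of the closed point of the spectrum
of a local ring. The neighbourhood is empty for `n = 0`. -/
noncomputable def infinitesimalNeighborhood (n : ℕ) :
    Spec (.of (R ⧸ IsLocalRing.maximalIdeal R ^ n)) ⟶ Spec R :=
  Spec.map (CommRingCat.ofHom (Ideal.Quotient.mk _))

theorem infinitesimalNeighborhood_apply {n : ℕ}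
    (t : Spec (.of (R ⧸ IsLocalRing.maximalIdeal R ^ n))) :
    infinitesimalNeighborhood R n t = IsLocalRing.closedPoint R := by
  refine PrimeSpectrum.ext ((IsLocalRing.maximalIdeal.isMaximal R).eq_of_le
    (infinitesimalNeighborhood R n t).2.ne_top
    ((infinitesimalNeighborhood R n t).2.le_of_pow_le (n := n) fun r hr ↦ ?_)).symm
  change Ideal.Quotient.mk (IsLocalRing.maximalIdeal R ^ n) r ∈ t.asIdeal
  rw [Ideal.Quotient.eq_zero_iff_mem.mpr hr]
  exact zero_mem _

theorem eq_of_forall_infinitesimalNeighborhood_comp_eq [IsNoetherianRing R] {g h : Spec R ⟶ X}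
    (H : ∀ n, infinitesimalNeighborhood R n ≫ g = infinitesimalNeighborhood R n ≫ h) :
    g = h := by
  have hpt : g (IsLocalRing.closedPoint R) = h (IsLocalRing.closedPoint R) := by
    obtain ⟨t⟩ : Nonempty (Spec (.of (R ⧸ IsLocalRing.maximalIdeal R ^ 1))) := by
      rw [pow_one]
      infer_instance
    simpa only [Scheme.Hom.comp_apply, infinitesimalNeighborhood_apply] using congr(($(H 1)) t)
  obtain ⟨φ, hφ⟩ := exists_specMap_comp_fromSpecStalk_eq g hpt
  obtain ⟨ψ, hψ⟩ := exists_specMap_comp_fromSpecStalk_eq h rfl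
  have hmod (n : ℕ) : φ ≫ CommRingCat.ofHom (Ideal.Quotient.mk (IsLocalRing.maximalIdeal R ^ n)) =
      ψ ≫ CommRingCat.ofHom (Ideal.Quotient.mk (IsLocalRing.maximalIdeal R ^ n)) := by
    apply Spec.map_injective
    rw [Spec.map_comp, Spec.map_comp, ← cancel_mono (X.fromSpecStalk _), Category.assoc,
      Category.assoc, hφ, hψ]
    exact H n
  suffices φ = ψ by rw [← hφ, this, hψ]
  ext a
  have hmem : φ a - ψ a ∈ ⨅ n : ℕ, IsLocalRing.maximalIdeal R ^ n :=
    Ideal.mem_iInf.mpr fun n ↦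
      (Ideal.Quotient.mk_eq_mk_iff_sub_mem _ _).mp congr(($(hmod n)) a)
  rwa [Ideal.iInf_pow_eq_bot_of_isLocalRing _ (Ideal.IsPrime.ne_top inferInstance),
    Ideal.mem_bot, sub_eq_zero] at hmem

end InfinitesimalNeighborhood

section Rigidity

variable {k : Type u} [Field k] {X Y Z T : Over (Spec (.of k))}

theorem lift_comp_eq_of_comp_toAffinization_eq [CompactSpace X.left] [QuasiSeparatedSpace X.left]
    [CompactSpace T.left] [QuasiSeparatedSpace T.left] (μ : X ⊗ T ⟶ Z) {U : Z.left.Opens}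
    (hU : IsAffineOpen U) (hμ : ∀ p, μ.left p ∈ U) {x y : Y ⟶ X}
    (h : x ≫ toAffinization X = y ≫ toAffinization X) (t : Y ⟶ T) :
    lift x t ≫ μ = lift y t ≫ μ := by
  let U' : Over (Spec (.of k)) := Over.mk (U.ι ≫ Z.hom)
  let j : U' ⟶ Z := Over.homMk U.ι
  have : IsAffine U'.left := hU
  have hrange : Set.range μ.left ⊆ Set.range U.ι := by
    rw [Scheme.Opens.range_ι]
    exact Set.range_subset_iff.mpr hμ
  have : IsOpenImmersion j.left := inferInstanceAs (IsOpenImmersion U.ι)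
  obtain ⟨μ', hμ'⟩ := over_exists_comp_eq_of_range_subset j μ hrange
  obtain ⟨d, hd⟩ := over_exists_comp_eq_of_isIso_appTop (toAffinization X ⊗ₘ 𝟙 T) μ'
  have hlift (w : Y ⟶ X) : lift w t ≫ μ = lift (w ≫ toAffinization X) t ≫ d ≫ j := by
    rw [← hμ', ← hd]
    simp
  rw [hlift, h, ← hlift]

open scoped RingObj

variable [RingObj X]

theorem mul_left_apply_eq_zeroPoint (f : Y ⟶ X) {g : Y ⟶ X} {p : Y.left}
    (hg : g.left p = zeroPoint X) : (f * g).left p = zeroPoint X := by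
  rw [← fromResiduePoint_comp_eq_zero_iff] at hg ⊢
  rw [MonObj.comp_mul, hg, mul_zero]

theorem mul_eq_zero_of_comp_toAffinization_eq_zero [CompactSpace X.left] [CompactSpace T.left]
    [QuasiSeparatedSpace T.left] {a : T ⟶ X}
    (ha : ∀ t, a.left t = zeroPoint X) {y : T ⟶ X}
    (hy : y ≫ toAffinization X = 0 ≫ toAffinization X) : y * a = 0 := by
  obtain ⟨U, hU, hzero, -⟩ := exists_isAffineOpen_mem_and_subset (U := ⊤)
    (x := zeroPoint X) trivial
  have hμ (p) : (fst X T * (snd X T ≫ a)).left p ∈ U := by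
    rwa [mul_left_apply_eq_zeroPoint _ (g := snd X T ≫ a) (ha _)]
  simpa [MonObj.comp_mul] using
    lift_comp_eq_of_comp_toAffinization_eq _ hU hμ hy (𝟙 T)

end Rigidity

theorem isOpen_of_forall_mem_closedPoints_mem_nhds {α : Type*} [TopologicalSpace α]
    [JacobsonSpace α] {E : Set α} (hE : IsClosed E) (h : ∀ x ∈ E ∩ closedPoints α, E ∈ 𝓝 x) :
    IsOpen E := by
  rw [← interior_eq_iff_isOpen, ← Set.sdiff_eq_empty.trans interior_subset.ge_iff_eq,
    ← Set.not_nonempty_iff_eq_empty]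
  intro hne
  obtain ⟨x, ⟨hxE, hxint⟩, hx⟩ :=
    nonempty_inter_closedPoints hne (hE.sdiff isOpen_interior).isLocallyClosed
  exact hxint (mem_interior_iff_mem_nhds.mpr (h x ⟨hxE, hx⟩))

section RationalPoints

variable {k : Type u} [Field k] {X Y : Over (Spec (.of k))}

theorem isClosed_singleton_imagePoint (x : 𝟙_ (Over (Spec (.of k))) ⟶ X) :
    IsClosed {imagePoint x} := by
  have := isClosedImmersion_left_of_unit x
  have hrange : Set.range x.left = {imagePoint x} := by
    refine Set.eq_singleton_iff_unique_mem.mpr ⟨⟨IsLocalRing.closedPoint k, rfl⟩, ?_⟩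
    rintro _ ⟨t, rfl⟩
    exact left_apply_eq_imagePoint x t
  exact hrange ▸ x.left.isClosedEmbedding.isClosed_range

theorem imagePoint_injective :
    Function.Injective (imagePoint : (𝟙_ (Over (Spec (.of k))) ⟶ X) → X.left) := by
  intro x y h
  have : IsReduced (𝟙_ (Over (Spec (.of k)))).left := inferInstanceAs (IsReduced (Spec (.of k)))
  rw [eq_toUnit_comp_of_forall_left_apply_eq x y fun t ↦ (left_apply_eq_imagePoint x t).trans h,
    toUnit_unit, Category.id_comp]

theorem exists_imagePoint_eq [IsAlgClosed k] [LocallyOfFiniteType X.hom] {p : X.left}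
    (hp : p ∈ closedPoints X.left) : ∃ x : 𝟙_ (Over (Spec (.of k))) ⟶ X, imagePoint x = p :=
  ⟨Over.homMk (pointOfClosedPoint X.hom p hp) (pointOfClosedPoint_comp ..),
    pointOfClosedPoint_apply ..⟩

end RationalPoints

section MulLeft

open scoped RingObj

variable {k : Type u} [Field k] {X Y : Over (Spec (.of k))} [RingObj X]

/-- Left multiplication by a `k`-rational point `y`, as an endomorphism of the ring scheme. -/
noncomputable def mulLeft (y : 𝟙_ (Over (Spec (.of k))) ⟶ X) : X ⟶ X :=
  (toUnit X ≫ y) * 𝟙 X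

theorem comp_mulLeft (t : Y ⟶ X) (y : 𝟙_ (Over (Spec (.of k))) ⟶ X) :
    t ≫ mulLeft y = (toUnit Y ≫ y) * t := by
  simp [mulLeft, MonObj.comp_mul]

theorem preimage_mulLeft_mem_nhds [LocallyOfFiniteType X.hom] [CompactSpace X.left]
    {y : 𝟙_ (Over (Spec (.of k))) ⟶ X} (hy : y ≫ toAffinization X = 0 ≫ toAffinization X) :
    (mulLeft y).left ⁻¹' {zeroPoint X} ∈ 𝓝 (zeroPoint X) := by
  have : IsLocallyNoetherian X.left := LocallyOfFiniteType.isLocallyNoetherian X.hom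
  obtain ⟨V, hV, hVzero⟩ : ∃ V : X.left.Opens, zeroPoint X ∈ V ∧
      V.ι ≫ (mulLeft y).left = V.ι ≫ (0 : X ⟶ X).left := by
    apply spread_out_unique_of_isGermInjective'
    apply eq_of_forall_infinitesimalNeighborhood_comp_eq
    intro n
    let q := infinitesimalNeighborhood (X.left.presheaf.stalk (zeroPoint X)) n ≫
      X.left.fromSpecStalk _
    let T : Over (Spec (.of k)) := Over.mk (q ≫ X.hom)
    have : IsAffine T.left := inferInstanceAs (IsAffine (Spec _))
    let a : T ⟶ X := Over.homMk q
    have ha (t : T.left) : a.left t = zeroPoint X :=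
      (congrArg _ (infinitesimalNeighborhood_apply t)).trans Scheme.fromSpecStalk_closedPoint
    have hya : (toUnit T ≫ y) ≫ toAffinization X = 0 ≫ toAffinization X := by
      rw [Category.assoc, hy, ← AddMonObj.comp_zero (toUnit T), Category.assoc]
    have hmul : a ≫ mulLeft y = a ≫ 0 := by
      rw [comp_mulLeft, AddMonObj.comp_zero, mul_eq_zero_of_comp_toAffinization_eq_zero ha hya]
    simpa only [Over.comp_left, a, q, Over.homMk_left, Category.assoc] using congr(($hmul).left)
  refine Filter.mem_of_superset (V.2.mem_nhds hV) fun p hp ↦ ?_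
  have hp' : (mulLeft y).left p = (0 : X ⟶ X).left p := congr($hVzero ⟨p, hp⟩)
  exact hp'.trans (zero_left_apply p)

theorem isClopen_preimage_mulLeft [IsAlgClosed k] [LocallyOfFiniteType X.hom]
    {y : 𝟙_ (Over (Spec (.of k))) ⟶ X}
    (hy : (mulLeft y).left ⁻¹' {zeroPoint X} ∈ 𝓝 (zeroPoint X)) :
    IsClopen ((mulLeft y).left ⁻¹' {zeroPoint X}) := by
  have : JacobsonSpace X.left := LocallyOfFiniteType.jacobsonSpace X.hom
  have hclosed := (isClosed_singleton_imagePoint (0 : 𝟙_ _ ⟶ X)).preimage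
    (mulLeft y).left.continuous
  refine ⟨hclosed, isOpen_of_forall_mem_closedPoints_mem_nhds hclosed fun e he ↦ ?_⟩
  obtain ⟨x, rfl⟩ := exists_imagePoint_eq he.2
  have hyx : x ≫ mulLeft y = 0 := imagePoint_injective he.1
  -- The annihilator of `y` is a subgroup, so translation by `x` carries openness from `0` to `x`.
  let τ : X ⟶ X := 𝟙 X - toUnit X ≫ x
  have hτ : τ ≫ mulLeft y = mulLeft y := by
    have hyx' : (toUnit X ≫ y) * (toUnit X ≫ x) = 0 := by
      rw [← comp_mulLeft, Category.assoc, hyx, AddMonObj.comp_zero]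
    rw [comp_mulLeft, mul_sub, hyx', sub_zero, mulLeft]
  have hx : τ.left (imagePoint x) = zeroPoint X := by
    rw [← imagePoint_comp, AddGrpObj.comp_sub, Category.comp_id, comp_toUnit_assoc, toUnit_unit,
      Category.id_comp, sub_self]
  rw [← hx] at hy
  have hpre := τ.left.continuous.continuousAt.preimage_mem_nhds hy
  rwa [← Set.preimage_comp, ← TopCat.coe_comp, ← Scheme.Hom.comp_base, ← Over.comp_left, hτ, hx]
    at hpre

theorem eq_zero_of_comp_toAffinization_eq_zero [IsAlgClosed k] [LocallyOfFiniteType X.hom]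
    [ConnectedSpace X.left] [CompactSpace X.left] {y : 𝟙_ (Over (Spec (.of k))) ⟶ X}
    (hy : y ≫ toAffinization X = 0 ≫ toAffinization X) : y = 0 := by
  have hnhds := preimage_mulLeft_mem_nhds hy
  have huniv := (isClopen_preimage_mulLeft hnhds).eq_univ ⟨_, mem_of_mem_nhds hnhds⟩
  have hone : imagePoint (1 : 𝟙_ _ ⟶ X) ∈ (mulLeft y).left ⁻¹' {zeroPoint X} := by
    rw [huniv]
    trivial
  rw [Set.mem_preimage, ← imagePoint_comp, comp_mulLeft, toUnit_unit, Category.id_comp,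
    mul_one] at hone
  exact imagePoint_injective hone

end MulLeft

section AffinizationMap₂

variable {k : Type u} [Field k] {X Y Z T : Over (Spec (.of k))}
  [CompactSpace X.left] [QuasiSeparatedSpace X.left]
  [CompactSpace Y.left] [QuasiSeparatedSpace Y.left]

/-- The binary morphism between affinizations induced by a morphism `m : X ⊗ Y ⟶ Z`, for `X` and
`Y` quasi-compact and quasi-separated. -/
noncomputable def affinizationMap₂ (m : X ⊗ Y ⟶ Z) :
    affinization X ⊗ affinization Y ⟶ affinization Z :=
  (over_exists_comp_eq_of_isIso_appTop (toAffinization X ⊗ₘ toAffinization Y)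
    (m ≫ toAffinization Z)).choose

theorem tensorHom_comp_affinizationMap₂ (m : X ⊗ Y ⟶ Z) :
    (toAffinization X ⊗ₘ toAffinization Y) ≫ affinizationMap₂ m = m ≫ toAffinization Z :=
  (over_exists_comp_eq_of_isIso_appTop (toAffinization X ⊗ₘ toAffinization Y)
    (m ≫ toAffinization Z)).choose_spec

theorem lift_comp_affinizationMap₂ (m : X ⊗ Y ⟶ Z) (x : T ⟶ X) (y : T ⟶ Y) :
    lift (x ≫ toAffinization X) (y ≫ toAffinization Y) ≫ affinizationMap₂ m =
      lift x y ≫ m ≫ toAffinization Z := by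
  rw [← lift_map, Category.assoc, tensorHom_comp_affinizationMap₂]

end AffinizationMap₂

section AffinizationGroup

open scoped AddMonObj

variable {k : Type u} [Field k] {X T : Over (Spec (.of k))} [AddGrpObj X] [CompactSpace X.left]

variable (X) in
/-- The extension of the addition of `X` to its affinization. -/
noncomputable def affinizationAdd : affinization X ⊗ affinization X ⟶ affinization X :=
  affinizationMap₂ (fst X X + snd X X)

variable (X) in
/-- The extension of the subtraction of `X` to its affinization. -/
noncomputable def affinizationSub : affinization X ⊗ affinization X ⟶ affinization X :=
  affinizationMap₂ (fst X X - snd X X)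

theorem lift_comp_affinizationAdd (x y : T ⟶ X) :
    lift (x ≫ toAffinization X) (y ≫ toAffinization X) ≫ affinizationAdd X =
      (x + y) ≫ toAffinization X := by
  rw [affinizationAdd, lift_comp_affinizationMap₂, ← Category.assoc, AddMonObj.comp_add, lift_fst,
    lift_snd]

theorem lift_comp_affinizationSub (x y : T ⟶ X) :
    lift (x ≫ toAffinization X) (y ≫ toAffinization X) ≫ affinizationSub X =
      (x - y) ≫ toAffinization X := by
  rw [affinizationSub, lift_comp_affinizationMap₂, ← Category.assoc, AddGrpObj.comp_sub, lift_fst,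
    lift_snd]

theorem lift_self_comp_affinizationSub (c : T ⟶ affinization X) :
    lift c c ≫ affinizationSub X = 0 ≫ toAffinization X := by
  have hid : lift (𝟙 _) (𝟙 _) ≫ affinizationSub X =
      (0 : affinization X ⟶ X) ≫ toAffinization X := by
    apply over_eq_of_comp_eq_of_isIso_appTop (toAffinization X)
    have h := lift_comp_affinizationSub (𝟙 X) (𝟙 X)
    rw [sub_self, Category.id_comp] at h
    rw [comp_lift_assoc, Category.comp_id, h, ← Category.assoc, AddMonObj.comp_zero]
  simpa [comp_lift_assoc, AddMonObj.comp_zero_assoc] using congr(c ≫ $hid)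

theorem lift_affinizationSub_comp_affinizationAdd (c d : T ⟶ affinization X) :
    lift (lift c d ≫ affinizationSub X) d ≫ affinizationAdd X = c := by
  have huniv : lift (affinizationSub X) (snd _ _) ≫ affinizationAdd X = fst _ _ := by
    apply over_eq_of_comp_eq_of_isIso_appTop (toAffinization X ⊗ₘ toAffinization X)
    have hsub : (toAffinization X ⊗ₘ toAffinization X) ≫ affinizationSub X =
        (fst X X - snd X X) ≫ toAffinization X :=
      tensorHom_comp_affinizationMap₂ _
    rw [comp_lift_assoc, hsub, tensorHom_snd, lift_comp_affinizationAdd, sub_add_cancel,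
      tensorHom_fst]
  simpa [comp_lift_assoc] using congr(lift c d ≫ $huniv)

theorem range_subset_of_range_sub_subset [IsOpenImmersion (toAffinization X).left]
    {c : T ⟶ affinization X} {x : T ⟶ X}
    (h : Set.range (lift c (x ≫ toAffinization X) ≫ affinizationSub X).left ⊆
      Set.range (toAffinization X).left) :
    Set.range c.left ⊆ Set.range (toAffinization X).left := by
  obtain ⟨x', hx'⟩ := over_exists_comp_eq_of_range_subset _ _ h
  rw [← lift_affinizationSub_comp_affinizationAdd c (x ≫ toAffinization X), ← hx',
    lift_comp_affinizationAdd]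
  rintro _ ⟨t, rfl⟩
  exact ⟨_, rfl⟩

theorem exists_range_affinizationSub_subset [IsOpenImmersion (toAffinization X).left]
    {K : Over (Spec (.of k))} [IsAffine K.left] [Nonempty K.left] (c : K ⟶ affinization X) :
    ∃ (T : Over (Spec (.of k))) (_ : Nonempty T.left) (p : T ⟶ K) (x : T ⟶ X),
      Set.range (lift (p ≫ c) (x ≫ toAffinization X) ≫ affinizationSub X).left ⊆
        Set.range (toAffinization X).left := by
  let d : K ⊗ affinization X ⟶ affinization X := (c ▷ _) ≫ affinizationSub X
  let W : (K ⊗ affinization X).left.Opens := d.left ⁻¹ᵁ (toAffinization X).left.opensRange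
  have hW : (W : Set (K ⊗ affinization X).left).Nonempty := by
    obtain ⟨t⟩ : Nonempty K.left := inferInstance
    have hd : lift (𝟙 K) c ≫ d = 0 ≫ toAffinization X := by
      simpa [d] using lift_self_comp_affinizationSub c
    refine ⟨(lift (𝟙 K) c).left t, (0 : K ⟶ X).left t, ?_⟩
    exact congr(($hd).left t).symm
  have : IsAffine (K ⊗ affinization X).left :=
    inferInstanceAs (IsAffine (pullback K.hom (affinization X).hom))
  have : CompactSpace (K ⊗ X).left := inferInstanceAs (CompactSpace ↥(pullback K.hom X.hom))
  have := isDominant_of_isIso_appTop (𝟙 K ⊗ₘ toAffinization X).left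
  obtain ⟨p, hp⟩ := (𝟙 K ⊗ₘ toAffinization X).left.denseRange.exists_mem_open W.2 hW
  let q := fromResiduePoint (K ⊗ X) p
  refine ⟨_, inferInstanceAs (Nonempty (residuePoint (K ⊗ X) p).left), q ≫ fst _ _,
    q ≫ snd _ _, ?_⟩
  have hq : lift ((q ≫ fst _ _) ≫ c) ((q ≫ snd _ _) ≫ toAffinization X) =
      q ≫ (𝟙 K ⊗ₘ toAffinization X) ≫ (c ▷ _) := by
    ext1 <;> simp
  rw [hq, Category.assoc, Category.assoc]
  rintro _ ⟨t, rfl⟩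
  rw [fromResiduePoint_comp_left_apply]
  exact hp

theorem surjective_toAffinization_left [IsOpenImmersion (toAffinization X).left] :
    Surjective (toAffinization X).left := by
  refine ⟨fun c ↦ ?_⟩
  obtain ⟨T, ⟨t⟩, p, x, hrange⟩ :=
    exists_range_affinizationSub_subset (fromResiduePoint (affinization X) c)
  have hc : (p ≫ fromResiduePoint _ c).left t = c := by
    rw [Over.comp_left, Scheme.Hom.comp_apply]
    exact Scheme.fromSpecResidueField_apply _ _
  obtain ⟨a, ha⟩ := range_subset_of_range_sub_subset hrange ⟨t, rfl⟩
  exact ⟨a, ha.trans hc⟩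

end AffinizationGroup

theorem isAffine_of_isQuasiAffine {k : Type u} [Field k] (X : Over (Spec (.of k))) [AddGrpObj X]
    [X.left.IsQuasiAffine] : IsAffine X.left := by
  have : IsOpenImmersion (toAffinization X).left :=
    inferInstanceAs (IsOpenImmersion X.left.toSpecΓ)
  exact ⟨(isIso_iff_isOpenImmersion_and_surjective X.left.toSpecΓ).mpr
    ⟨inferInstance, surjective_toAffinization_left⟩⟩

section QuasiFinite

variable {X Y : Scheme.{u}} (f : X ⟶ Y)

theorem locallyQuasiFinite_of_forall_mem_closedPoints [LocallyOfFiniteType f] [JacobsonSpace X]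
    (h : ∀ x ∈ closedPoints X, f ⁻¹' {f x} = {x}) : LocallyQuasiFinite f := by
  rw [← Scheme.Hom.quasiFiniteLocus_eq_top_iff, ← TopologicalSpace.Opens.coe_eq_univ,
    ← Set.compl_empty_iff, ← Set.not_nonempty_iff_eq_empty]
  intro hne
  obtain ⟨x, hx, hxc⟩ :=
    nonempty_inter_closedPoints hne f.quasiFiniteLocus.2.isClosed_compl.isLocallyClosed
  have : Subsingleton (f ⁻¹' {f x}) := by
    rw [h x hxc]
    infer_instance
  have : Subsingleton (f.fiber (f x)) := (f.fiberHomeo (f x)).injective.subsingleton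
  exact hx ((f.quasiFiniteAt_iff_isOpen_singleton_asFiber (x := x)).mpr (isOpen_discrete _))

theorem isQuasiAffine_of_locallyQuasiFinite [IsAffine Y] [LocallyOfFiniteType f] [IsSeparated f]
    [QuasiCompact f] [LocallyQuasiFinite f] : X.IsQuasiAffine :=
  have := QuasiCompact.compactSpace_of_compactSpace f
  have : IsAffine f.normalization := isAffine_of_isAffineHom f.fromNormalization
  Scheme.IsQuasiAffine.of_isImmersion f.toNormalization

end QuasiFinite

theorem preimage_singleton_of_injOn_closedPoints {k : Type u} [Field k] [IsAlgClosed k]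
    {X Y : Over (Spec (.of k))} [LocallyOfFiniteType X.hom] (f : X ⟶ Y)
    (hf : Set.InjOn f.left (closedPoints X.left)) {p : X.left} (hp : p ∈ closedPoints X.left) :
    f.left ⁻¹' {f.left p} = {p} := by
  have : JacobsonSpace X.left := LocallyOfFiniteType.jacobsonSpace X.hom
  obtain ⟨x, rfl⟩ := exists_imagePoint_eq hp
  have hfiber : IsClosed (f.left ⁻¹' {f.left (imagePoint x)}) := by
    rw [← imagePoint_comp]
    exact (isClosed_singleton_imagePoint (x ≫ f)).preimage f.left.continuous
  have hinter : f.left ⁻¹' {f.left (imagePoint x)} ∩ closedPoints X.left = {imagePoint x} := by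
    ext y
    exact ⟨fun hy ↦ hf hy.2 hp hy.1, by rintro rfl; exact ⟨rfl, hp⟩⟩
  rw [← hfiber.closure_eq,
    ← JacobsonSpace.closure_inter_closedPoints_eq_closure hfiber.isLocallyClosed, hinter,
    IsClosed.closure_eq hp]

section QuasiAffine

open scoped RingObj

variable {k : Type u} [Field k] {X : Over (Spec (.of k))} [RingObj X] [IsAlgClosed k]
  [LocallyOfFiniteType X.hom] [ConnectedSpace X.left] [CompactSpace X.left]

theorem eq_of_comp_toAffinization_eq {x y : 𝟙_ (Over (Spec (.of k))) ⟶ X}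
    (h : x ≫ toAffinization X = y ≫ toAffinization X) : x = y := by
  refine sub_eq_zero.mp (eq_zero_of_comp_toAffinization_eq_zero ?_)
  rw [← lift_comp_affinizationSub, h, lift_self_comp_affinizationSub]

theorem injOn_toAffinization_left_closedPoints :
    Set.InjOn (toAffinization X).left (closedPoints X.left) := by
  intro p hp q hq hpq
  obtain ⟨x, rfl⟩ := exists_imagePoint_eq hp
  obtain ⟨y, rfl⟩ := exists_imagePoint_eq hq
  rw [eq_of_comp_toAffinization_eq (imagePoint_injective hpq)]

variable (X) in
theorem isQuasiAffine_of_isAlgClosed : X.left.IsQuasiAffine := by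
  have : JacobsonSpace X.left := LocallyOfFiniteType.jacobsonSpace X.hom
  have hw : (toAffinization X).left ≫ (affinization X).hom = X.hom := Over.w (toAffinization X)
  have : LocallyOfFiniteType ((toAffinization X).left ≫ (affinization X).hom) :=
    hw ▸ inferInstance
  have : IsSeparated ((toAffinization X).left ≫ (affinization X).hom) := hw ▸ inferInstance
  have := locallyOfFiniteType_of_comp (toAffinization X).left (affinization X).hom
  have := IsSeparated.of_comp (toAffinization X).left (affinization X).hom
  have := locallyQuasiFinite_of_forall_mem_closedPoints (toAffinization X).left fun _ ↦
    preimage_singleton_of_injOn_closedPoints _ injOn_toAffinization_left_closedPoints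
  exact isQuasiAffine_of_locallyQuasiFinite (toAffinization X).left

end QuasiAffine

section Representable

open scoped AddMonObj MonObj RingObj

universe v

variable {C : Type*} [Category.{v} C] [CartesianMonoidalCategory C] [BraidedCategory C]

/-- The ring object structure on an object representing a presheaf of rings. -/
noncomputable abbrev ringObjOfRepresentableBy {X : C} (F : Cᵒᵖ ⥤ RingCat.{v})
    (α : (F ⋙ forget _).RepresentableBy X) : RingObj X :=
  let A : Cᵒᵖ ⥤ AddCommGrpCat := F ⋙ forget₂ _ AddCommGrpCat
  let M : Cᵒᵖ ⥤ MonCat := F ⋙ forget₂ _ SemiRingCat ⋙ forget₂ _ MonCat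
  letI : AddGrpObj X := .ofRepresentableBy X (A ⋙ forget₂ _ AddGrpCat) α
  letI : MonObj X := .ofRepresentableBy X M α
  have hadd {T : C} (a b : T ⟶ X) :
      α.homEquiv (a + b) = (α.homEquiv a + α.homEquiv b : F.obj (.op T)) :=
    map_add ((yonedaAddMonObjIsoOfRepresentableBy X (A ⋙ forget₂ _ AddGrpCat ⋙ forget₂ _ AddMonCat)
      α).hom.app (.op T)).hom a b
  have hmul {T : C} (a b : T ⟶ X) :
      α.homEquiv (a * b) = (α.homEquiv a * α.homEquiv b : F.obj (.op T)) :=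
    map_mul ((yonedaMonObjIsoOfRepresentableBy X M α).hom.app (.op T)).hom a b
  have : IsCommAddMonObj X := (isCommAddMonObj_iff_isAddCommutative X).mpr fun T ↦
    ⟨⟨fun a b ↦ α.homEquiv.injective (by
      rw [hadd, hadd]
      exact add_comm (G := F.obj (.op T)) _ _)⟩⟩
  { mul_add := by
      rw [mul_add_iff]
      intro T a b c
      apply α.homEquiv.injective
      simp only [hadd, hmul]
      exact mul_add (R := F.obj (.op T)) _ _ _
    add_mul := by
      rw [add_mul_iff]
      intro T a b c
      apply α.homEquiv.injective
      simp only [hadd, hmul]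
      exact add_mul (R := F.obj (.op T)) _ _ _ }

/-- The presheaf of rings represented by a ring object. -/
def yonedaRingObj (R : C) [RingObj R] : Cᵒᵖ ⥤ RingCat.{v} where
  obj T := .of (T.unop ⟶ R)
  map g := RingCat.ofHom
    { toFun a := g.unop ≫ a
      map_zero' := AddMonObj.comp_zero _
      map_add' := AddMonObj.comp_add _
      map_one' := MonObj.comp_one _
      map_mul' := MonObj.comp_mul _ }

/-- A right adjoint carries ring objects to ring objects. -/
noncomputable abbrev ringObjOfAdjunction {D : Type*} [Category.{v} D] [CartesianMonoidalCategory D]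
    [BraidedCategory D] {F : D ⥤ C} {G : C ⥤ D} (adj : F ⊣ G) (R : C) [RingObj R] :
    RingObj (G.obj R) :=
  ringObjOfRepresentableBy (F.op ⋙ yonedaRingObj R) (adj.representableBy R)

end Representable

section BaseChange

theorem connectedSpace_pullback_of_comp_eq_id {X S S' : Scheme.{u}} {f : X ⟶ S} {s : S ⟶ X}
    (hs : s ≫ f = 𝟙 S) (g : S' ⟶ S) [UniversallyOpen g] [UniversallyClosed g] [ConnectedSpace X]
    [ConnectedSpace S'] : ConnectedSpace ↥(pullback f g) := by
  let s' : S' ⟶ pullback f g := pullback.lift (g ≫ s) (𝟙 S') (by simp [hs])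
  have hpb : IsPullback s' g (pullback.fst f g) s := by
    refine .of_right ?_ (pullback.lift_fst ..) (IsPullback.of_hasPullback f g).flip
    rw [hs, pullback.lift_snd]
    exact IsPullback.of_horiz_isIso ⟨by simp⟩
  -- A nonempty clopen subset maps onto `X`, so it meets, hence contains, the image of `s'`.
  have hrange {A : Set ↥(pullback f g)} (hA : IsClopen A) (hne : A.Nonempty) :
      s' ⁻¹' A = Set.univ := by
    refine (hA.preimage s'.continuous).eq_univ ?_
    have hfst : pullback.fst f g '' A = Set.univ :=
      IsClopen.eq_univ ⟨(pullback.fst f g).isClosedMap _ hA.1,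
        (pullback.fst f g).isOpenMap _ hA.2⟩ (hne.image _)
    obtain ⟨t⟩ : Nonempty S' := inferInstance
    obtain ⟨p, hp, hpt⟩ : s (g t) ∈ pullback.fst f g '' A := hfst ▸ trivial
    obtain ⟨t', rfl, -⟩ := Scheme.exists_preimage_of_isPullback hpb p (g t) hpt
    exact ⟨t', hp⟩
  obtain ⟨t⟩ : Nonempty S' := inferInstance
  have hpre : PreconnectedSpace ↥(pullback f g) := by
    refine preconnectedSpace_iff_clopen.mpr fun A hA ↦ ?_
    by_contra! h
    have ht : t ∈ s' ⁻¹' A ∩ s' ⁻¹' Aᶜ := by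
      rw [hrange hA h.1, hrange hA.compl (Set.nonempty_compl.mpr h.2)]
      exact ⟨trivial, trivial⟩
    exact ht.2 ht.1
  exact { toNonempty := ⟨s' t⟩ }

theorem isPullback_tensorHom_id_fst {C : Type*} [Category* C] [CartesianMonoidalCategory C]
    {X Y : C} (f : X ⟶ Y) (T : C) : IsPullback (f ⊗ₘ 𝟙 T) (fst X T) (fst Y T) f := by
  refine ⟨⟨by simp⟩, ⟨PullbackCone.IsLimit.mk _ (fun s ↦ lift s.snd (s.fst ≫ snd _ _)) ?_ ?_ ?_⟩⟩
  · intro s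
    ext1 <;> simp [s.condition]
  · simp
  · intro s m hfst hsnd
    ext1
    · simpa using hsnd
    · simp [← hfst]

variable {k : Type u} [Field k]

theorem isAffine_of_isAffine_tensorObj {X T : Over (Spec (.of k))} [CompactSpace X.left]
    [QuasiSeparatedSpace X.left] [IsAffine T.left] [Nonempty T.left] [IsAffine (X ⊗ T).left] :
    IsAffine X.left := by
  have : IsAffine (affinization X ⊗ T).left :=
    inferInstanceAs (IsAffine (pullback (affinization X).hom T.hom))
  have hiso : IsIso (toAffinization X ⊗ₘ 𝟙 T).left := isIso_of_isIso_appTop _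
  have : IsAffineHom T.hom := isAffineHom_of_isAffine _
  have : Surjective T.hom := by
    obtain ⟨t⟩ : Nonempty T.left := inferInstance
    exact ⟨fun s ↦ ⟨t, Subsingleton.elim (α := Spec (.of k)) _ _⟩⟩
  have hpb := (isPullback_tensorHom_id_fst (toAffinization X) T).map (Over.forget _)
  have hfst : (@Surjective ⊓ @Flat ⊓ @QuasiCompact : MorphismProperty Scheme.{u})
      (fst (affinization X) T).left := by
    change (@Surjective ⊓ @Flat ⊓ @QuasiCompact : MorphismProperty Scheme.{u})
      (pullback.fst (affinization X).hom T.hom)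
    exact ⟨⟨inferInstance, inferInstance⟩, inferInstance⟩
  exact ⟨MorphismProperty.of_isPullback_of_descendsAlong
    (P := MorphismProperty.isomorphisms Scheme) hpb hfst hiso⟩

end BaseChange

/-- The ring scheme over `S` given by a functorial ring structure on the sets `X(T)` of
`S`-morphisms from `T` to `X`. -/
noncomputable abbrev ringObjOfPoints {S X : Scheme.{u}} (f : X ⟶ S)
    (ringStr : ∀ (T : Scheme.{u}) (fT : T ⟶ S), Ring {g : T ⟶ X // g ≫ f = fT})
    (hnat : ∀ (T T' : Scheme.{u}) (fT : T ⟶ S) (fT' : T' ⟶ S) (h : T' ⟶ T), h ≫ fT = fT' →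
      ∃ φ : {g : T ⟶ X // g ≫ f = fT} →+* {g : T' ⟶ X // g ≫ f = fT'},
        ∀ g : {g : T ⟶ X // g ≫ f = fT}, (φ g : T' ⟶ X) = h ≫ (g : T ⟶ X)) :
    RingObj (Over.mk f) := by
  choose φ hφ using fun T T' fT fT' ↦ hnat T T' fT fT'
  let F : (Over S)ᵒᵖ ⥤ RingCat.{u} :=
    { obj T := .of {g : T.unop.left ⟶ X // g ≫ f = T.unop.hom}
      map h := RingCat.ofHom (φ _ _ _ _ h.unop.left (Over.w h.unop))
      map_id T := by
        ext g : 3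
        simp [hφ]
      map_comp h h' := by
        ext g : 3
        simp [hφ] }
  exact ringObjOfRepresentableBy F
    { homEquiv :=
        { toFun a := ⟨a.left, Over.w a⟩
          invFun b := Over.homMk b.1 b.2
          left_inv _ := rfl
          right_inv _ := rfl }
      homEquiv_comp h a :=
        Subtype.ext (hφ _ _ _ _ h.left (Over.w h) ⟨a.left, Over.w a⟩).symm }

end RingScheme

open RingScheme MonoidalCategory AddMonObj in
theorem connected_finiteType_ring_scheme_is_affine_general {k : Type u} [Field k]
    (X : Over (Spec (.of k))) [RingObj X] [LocallyOfFiniteType X.hom] [QuasiCompact X.hom]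
    [ConnectedSpace X.left] : IsAffine X.left := by
  have := QuasiCompact.compactSpace_of_compactSpace X.hom
  let g := Spec.map (CommRingCat.ofHom (algebraMap k (AlgebraicClosure k)))
  have : IsIntegralHom g :=
    IsIntegralHom.SpecMap_iff.mpr (algebraMap_isIntegral_iff.mpr inferInstance)
  let Y := (Over.pullback g).obj X
  have : ConnectedSpace Y.left :=
    connectedSpace_pullback_of_comp_eq_id (S := Spec (.of k)) (Over.w (0 : 𝟙_ _ ⟶ X)) g
  let : RingObj Y := ringObjOfAdjunction (Over.mapPullbackAdj g) X
  have : LocallyOfFiniteType Y.hom :=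
    inferInstanceAs (LocallyOfFiniteType (Limits.pullback.snd X.hom g))
  have : QuasiCompact Y.hom := inferInstanceAs (QuasiCompact (Limits.pullback.snd X.hom g))
  have := QuasiCompact.compactSpace_of_compactSpace Y.hom
  have := isQuasiAffine_of_isAlgClosed Y
  have : IsAffine (X ⊗ Over.mk g).left := isAffine_of_isQuasiAffine Y
  have : IsAffine (Over.mk g).left := inferInstanceAs (IsAffine (Spec _))
  have : Nonempty (Over.mk g).left := inferInstanceAs (Nonempty (Spec _))
  exact isAffine_of_isAffine_tensorObj (T := Over.mk g)

/-- **Theorem 2.4**: let `k` be a field and `X` a ring scheme over `k` whose underlying scheme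
is of finite type over `k` (locally of finite type and quasi-compact) and whose underlying
topological space is connected.  Then `X` is affine.

A ring scheme structure over `k` is encoded, via the functor of points, as a commutative
unital ring structure on the set `X(T) = Hom_{Spec k}(T, X)` of `T`-points for every
`k`-scheme `T`, functorial in `T` (precomposition with any morphism of `k`-schemes is a ring
homomorphism); this is equivalent to giving addition, multiplication, negation, zero and one
morphisms over `Spec k` satisfying the commutative ring axioms as equalities of morphisms of
schemes over `Spec k`. -/
theorem connected_finiteType_ring_scheme_is_affine
    (k : Type) [Field k]
    (X : Scheme) (f : X ⟶ Spec (CommRingCat.of k))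
    [LocallyOfFiniteType f] [QuasiCompact f]
    (hconn : ConnectedSpace X)
    -- a commutative ring structure on the `T`-points of `X` for every `k`-scheme `T`
    (ringStr : ∀ (T : Scheme) (fT : T ⟶ Spec (CommRingCat.of k)),
      CommRing {g : T ⟶ X // g ≫ f = fT})
    -- functoriality: precomposition with a morphism of `k`-schemes is a ring homomorphism
    (hnat : ∀ (T T' : Scheme) (fT : T ⟶ Spec (CommRingCat.of k))
      (fT' : T' ⟶ Spec (CommRingCat.of k)) (h : T' ⟶ T), h ≫ fT = fT' →
      letI := ringStr T fT
      letI := ringStr T' fT'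
      ∃ φ : {g : T ⟶ X // g ≫ f = fT} →+* {g : T' ⟶ X // g ≫ f = fT'},
        ∀ g : {g : T ⟶ X // g ≫ f = fT}, (φ g : T' ⟶ X) = h ≫ (g : T ⟶ X)) :
    IsAffine X := by
  let := RingScheme.ringObjOfPoints f (fun T fT ↦ (ringStr T fT).toRing) hnat
  have : LocallyOfFiniteType (Over.mk f).hom := ‹LocallyOfFiniteType f›
  have : QuasiCompact (Over.mk f).hom := ‹QuasiCompact f›
  have : ConnectedSpace (Over.mk f).left := hconn
  exact connected_finiteType_ring_scheme_is_affine_general (Over.mk f)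
end

section
/- Let k be a field and A a k-biring that is finitely generated as a k-algebra and whose only idempotent elements are 0 and 1 (so that Spec A is a connected affine ring scheme of finite type over k). Then the additive group scheme of Spec A is unipotent: for every Hopf ideal I of A with I ≠ ker ε⁺, there exists x ∈ A with x ∉ I and Δ⁺(x) − x ⊗ 1 − 1 ⊗ x ∈ I ⊗ A + A ⊗ I. (Theorem 2.6 of the paper: over a field, all connected ring schemes of finite type are unipotent.) -/
/- A `k`-biring: a commutative `k`-algebra `A` with coaddition, additive counit, antipode,
comultiplication and multiplicative counit, such that for every commutative `k`-algebra `R`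
the induced operations make `Hom_{k-alg}(A, R)` a commutative unital ring (equivalently, the
diagrammatic coring/codistributivity axioms hold). -/

open scoped TensorProduct

/-- The binary operation on `k`-algebra homomorphisms `A →ₐ[k] R` induced by a
comultiplication-type map `Δ : A →ₐ[k] A ⊗[k] A`: `(f, g) ↦ mult ∘ (f ⊗ g) ∘ Δ`. -/
noncomputable def ptOp (k A : Type) [Field k] [CommRing A] [Algebra k A]
    (Δ : A →ₐ[k] A ⊗[k] A) {R : Type} [CommRing R] [Algebra k R]
    (f g : A →ₐ[k] R) : A →ₐ[k] R :=
  (Algebra.TensorProduct.lmul' k (S := R)).comp ((Algebra.TensorProduct.map f g).comp Δ)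

/-- The constant point induced by a counit-type map `ε : A →ₐ[k] k`. -/
noncomputable def ptConst (k A : Type) [Field k] [CommRing A] [Algebra k A]
    (ε : A →ₐ[k] k) {R : Type} [CommRing R] [Algebra k R] : A →ₐ[k] R :=
  (Algebra.ofId k R).comp ε

/-- A `k`-biring structure on the commutative `k`-algebra `A`; equivalently, the structure of
an affine ring scheme on `Spec A` over `k`. -/
structure Biring (k A : Type) [Field k] [CommRing A] [Algebra k A] where
  coadd : A →ₐ[k] A ⊗[k] A
  counitAdd : A →ₐ[k] k
  antipode : A →ₐ[k] A
  comul : A →ₐ[k] A ⊗[k] A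
  counitMul : A →ₐ[k] k
  pt_add_assoc : ∀ (R : Type) [CommRing R] [Algebra k R] (f g h : A →ₐ[k] R),
    ptOp k A coadd (ptOp k A coadd f g) h = ptOp k A coadd f (ptOp k A coadd g h)
  pt_add_comm : ∀ (R : Type) [CommRing R] [Algebra k R] (f g : A →ₐ[k] R),
    ptOp k A coadd f g = ptOp k A coadd g f
  pt_zero_add : ∀ (R : Type) [CommRing R] [Algebra k R] (f : A →ₐ[k] R),
    ptOp k A coadd (ptConst k A counitAdd) f = f
  pt_add_neg : ∀ (R : Type) [CommRing R] [Algebra k R] (f : A →ₐ[k] R),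
    ptOp k A coadd f (f.comp antipode) = ptConst k A counitAdd
  pt_mul_assoc : ∀ (R : Type) [CommRing R] [Algebra k R] (f g h : A →ₐ[k] R),
    ptOp k A comul (ptOp k A comul f g) h = ptOp k A comul f (ptOp k A comul g h)
  pt_mul_comm : ∀ (R : Type) [CommRing R] [Algebra k R] (f g : A →ₐ[k] R),
    ptOp k A comul f g = ptOp k A comul g f
  pt_one_mul : ∀ (R : Type) [CommRing R] [Algebra k R] (f : A →ₐ[k] R),
    ptOp k A comul (ptConst k A counitMul) f = f
  pt_mul_add : ∀ (R : Type) [CommRing R] [Algebra k R] (f g h : A →ₐ[k] R),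
    ptOp k A comul f (ptOp k A coadd g h)
      = ptOp k A coadd (ptOp k A comul f g) (ptOp k A comul f h)

/-- The `k`-submodule `I ⊗ A + A ⊗ I` of `A ⊗[k] A` spanned by the elements `i ⊗ a` and
`a ⊗ i` with `i ∈ I`, `a ∈ A`. -/
def sideIdeal (k A : Type) [Field k] [CommRing A] [Algebra k A] (I : Ideal A) :
    Submodule k (A ⊗[k] A) :=
  Submodule.span k {x : A ⊗[k] A | ∃ i ∈ I, ∃ a : A, x = i ⊗ₜ[k] a ∨ x = a ⊗ₜ[k] i}

/-
Codistributivity says that `φ ↦ (id ⊗ φ) ∘ Δ×` is an algebra homomorphism from the dual `A*` to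
`Hom_k(A, A)`, both with convolution along `Δ⁺`. So if `φ 1 = 0` and `t` is a matrix over `A` with
`Δ⁺ t = t ⊗ t`, then applying `(id ⊗ φ) ∘ Δ×` to the entries of `t` gives a matrix `u` over `A`
which is algebraic over `k`, vanishes at the point `ε⁺` and takes the value `φ(t)` at the point
`ε×`. By algebraicity, some power of `u` divides an idempotent matrix that fixes it; as `Spec A` is
connected, an idempotent matrix vanishing at a point is zero, so `u` and `φ(t)` are nilpotent.
Hence the functionals vanishing at `1` act locally nilpotently on `A`. They commute, so an
Engel-type argument yields a nonzero vector of `A / (k + I)` killed by all of them; its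
representative in `ker ε⁺` is a nonzero primitive element modulo `I`.
-/

open WithConv

section Slice

variable {R M N P : Type*} [CommSemiring R] [AddCommMonoid M] [Module R M] [AddCommMonoid N]
  [Module R N] [AddCommMonoid P] [Module R P]

/-- The partial evaluation `id ⊗ φ : M ⊗ N → M` of a tensor in its second factor along a
functional `φ`, linear in `φ`. -/
noncomputable def slice : (N →ₗ[R] R) →ₗ[R] M ⊗[R] N →ₗ[R] M :=
  (TensorProduct.rid R M).toLinearMap.compRight R ∘ₗ LinearMap.lTensorHom M

@[simp]
lemma slice_tmul (φ : N →ₗ[R] R) (m : M) (n : N) : slice φ (m ⊗ₜ[R] n) = φ n • m := by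
  simp [slice]

lemma slice_comp (φ : P →ₗ[R] R) (g : N →ₗ[R] P) (z : M ⊗[R] N) :
    slice (φ ∘ₗ g) z = slice φ (g.lTensor M z) := by
  simp [slice, LinearMap.lTensor_comp_apply]

lemma slice_rTensor (φ : N →ₗ[R] R) (g : M →ₗ[R] P) (z : M ⊗[R] N) :
    slice φ (g.rTensor N z) = g (slice φ z) := by
  have : slice φ ∘ₗ g.rTensor N = g ∘ₗ slice φ := by ext; simp
  exact congr($this z)

lemma slice_assoc (φ : N →ₗ[R] R) (ψ : P →ₗ[R] R) (z : M ⊗[R] N ⊗[R] P) :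
    slice (LinearMap.mul' R R ∘ₗ TensorProduct.map φ ψ) (TensorProduct.assoc R M N P z) =
      slice φ (slice ψ z) := by
  have : slice (LinearMap.mul' R R ∘ₗ TensorProduct.map φ ψ) ∘ₗ
      (TensorProduct.assoc R M N P).toLinearMap = slice φ ∘ₗ slice ψ := by
    ext; simp [smul_smul, mul_comm]
  exact congr($this z)

lemma exists_fg_forall_slice_mem (z : M ⊗[R] N) :
    ∃ W : Submodule R M, W.FG ∧ ∀ φ : N →ₗ[R] R, slice φ z ∈ W := by
  classical
  obtain ⟨S, rfl⟩ := TensorProduct.exists_finset z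
  refine ⟨Submodule.span R (S.image Prod.fst), ⟨_, rfl⟩, fun φ ↦ ?_⟩
  simp only [map_sum, slice_tmul]
  exact sum_mem fun p hp ↦ Submodule.smul_mem _ _ <|
    Submodule.subset_span <| Finset.mem_image_of_mem _ hp

lemma mem_range_rTensor_subtype_of_forall_slice_mem [Module.Free R N] {V : Submodule R M}
    {z : M ⊗[R] N} (hz : ∀ φ : N →ₗ[R] R, slice φ z ∈ V) :
    z ∈ LinearMap.range (V.subtype.rTensor N) := by
  classical
  let b := Module.Free.chooseBasis R N
  obtain ⟨m, rfl⟩ := TensorProduct.eq_repr_basis_right b z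
  refine sum_mem fun i hi ↦ ?_
  have hm : m i ∈ V := by
    have hcoord : slice (b.coord i) (m.sum fun i m ↦ m ⊗ₜ[R] b i) = m i := by
      simp [Finsupp.sum, Finsupp.single_apply, Finsupp.mem_support_iff.1 hi]
    exact hcoord ▸ hz (b.coord i)
  exact ⟨⟨m i, hm⟩ ⊗ₜ b i, rfl⟩

end Slice

lemma eq_of_sum_tmul_eq_sum_tmul {k M N ι : Type*} [Field k] [AddCommGroup M] [Module k M]
    [AddCommGroup N] [Module k N] [Fintype ι] {c : ι → M} (hc : LinearIndependent k c)
    {y z : ι → N} (h : ∑ i, c i ⊗ₜ[k] y i = ∑ i, c i ⊗ₜ[k] z i) : y = z := by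
  classical
  ext i
  obtain ⟨χ, hχ⟩ := LinearMap.exists_extend (Finsupp.lapply i ∘ₗ hc.repr)
  have hχc (j) : χ (c j) = if j = i then 1 else 0 := by
    have := congr($hχ ⟨c j, Submodule.subset_span ⟨j, rfl⟩⟩)
    simpa [hc.repr_eq_single j, Finsupp.single_apply] using this
  simpa [hχc] using congr(TensorProduct.lid k N (χ.rTensor N $h))

section DualAction

variable {R C : Type*} [CommSemiring R] [AddCommMonoid C] [Module R C] [Coalgebra R C]

open Coalgebra

variable (R C) in
/-- The action of the convolution algebra dual to a coalgebra `C` on `C` itself, given by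
`φ • c = ∑ φ(c₂) c₁` where `Δ c = ∑ c₁ ⊗ c₂`. -/
noncomputable def dualAction : WithConv (C →ₗ[R] R) →ₐ[R] Module.End R C :=
  AlgHom.ofLinearMap
    ((comul (R := R) (A := C)).lcomp R C ∘ₗ slice ∘ₗ (WithConv.linearEquiv R _).toLinearMap)
    (by
      ext c
      simp [LinearMap.convOne_def, slice])
    (fun φ ψ ↦ by
      ext c
      change slice ((LinearMap.mul' R R ∘ₗ TensorProduct.map φ.ofConv ψ.ofConv) ∘ₗ comul)
        (comul c) = slice φ.ofConv (comul (slice ψ.ofConv (comul c)))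
      rw [slice_comp, ← coassoc_apply, slice_assoc, slice_rTensor])

lemma dualAction_apply (φ : WithConv (C →ₗ[R] R)) (c : C) :
    dualAction R C φ c = slice φ.ofConv (comul c) := rfl

@[simp]
lemma counit_dualAction_apply (φ : WithConv (C →ₗ[R] R)) (c : C) :
    counit (R := R) (dualAction R C φ c) = φ.ofConv c := by
  rw [dualAction_apply, ← slice_rTensor, rTensor_counit_comul, slice_tmul, smul_eq_mul, mul_one]

variable (R) in
/-- The orbit of `c` under `dualAction`, i.e. the subcomodule of `C` generated by `c`. -/
noncomputable def dualOrbit (c : C) : Submodule R C :=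
  LinearMap.range (LinearMap.applyₗ c ∘ₗ (dualAction R C).toLinearMap)

lemma self_mem_dualOrbit (c : C) : c ∈ dualOrbit R c :=
  ⟨1, by simp⟩

lemma dualAction_mem_dualOrbit (φ : WithConv (C →ₗ[R] R)) {c v : C} (hv : v ∈ dualOrbit R c) :
    dualAction R C φ v ∈ dualOrbit R c := by
  obtain ⟨ψ, rfl⟩ := hv
  exact ⟨φ * ψ, by simp⟩

end DualAction

lemma fg_dualOrbit {R C : Type*} [CommRing R] [IsNoetherianRing R] [AddCommGroup C] [Module R C]
    [Coalgebra R C] (c : C) : (dualOrbit R c).FG := by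
  obtain ⟨W, hWfg, hW⟩ := exists_fg_forall_slice_mem (Coalgebra.comul (R := R) c)
  refine hWfg.of_le ?_
  rintro _ ⟨φ, rfl⟩
  exact hW φ.ofConv

section MultiplicativeMatrix

open Coalgebra

/-- A matrix over a coalgebra whose entries comultiply as the coefficients of a representation:
`Δ t = t ⊗ t` and `ε t = 1`, with tensors multiplied as matrices. -/
structure IsMultiplicativeMatrix (R : Type*) {C n : Type*} [CommSemiring R] [AddCommMonoid C]
    [Module R C] [Coalgebra R C] [Fintype n] [DecidableEq n] (t : Matrix n n C) : Prop where
  comul_apply : ∀ i j, comul (R := R) (t i j) = ∑ l, t i l ⊗ₜ t l j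
  counit_apply : ∀ i j, counit (R := R) (t i j) = (1 : Matrix n n R) i j

/-- Entrywise evaluation of a multiplicative matrix: convolution products of linear maps become
matrix products. -/
noncomputable def IsMultiplicativeMatrix.evalAlgHom {R C n : Type*} [CommSemiring R]
    [AddCommMonoid C] [Module R C] [Coalgebra R C] [Fintype n] [DecidableEq n] {t : Matrix n n C}
    (ht : IsMultiplicativeMatrix R t) (S : Type*) [Semiring S] [Algebra R S] :
    WithConv (C →ₗ[R] S) →ₐ[R] Matrix n n S where
  toFun f := t.map f.ofConv
  map_one' := by
    ext i j
    simp [ht.counit_apply, Matrix.one_apply, apply_ite (algebraMap R S)]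
  map_mul' f g := by
    ext i j
    simp [ht.comul_apply, Matrix.mul_apply, LinearMap.convMul_apply]
  map_zero' := by ext; simp
  map_add' f g := by ext; simp
  commutes' r := by
    ext i j
    simp [ht.counit_apply, Matrix.one_apply, Matrix.algebraMap_matrix_apply,
      Algebra.algebraMap_eq_smul_one r, apply_ite (r • ·)]

variable {k C n : Type*} [Field k] [AddCommGroup C] [Module k C] [Coalgebra k C] [Fintype n]

lemma IsMultiplicativeMatrix.of_linearIndependent [DecidableEq n] {c : n → C}
    (hc : LinearIndependent k c) {t : Matrix n n C}
    (ht : ∀ j, comul (R := k) (c j) = ∑ i, c i ⊗ₜ t i j) : IsMultiplicativeMatrix k t where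
  comul_apply i j := by
    refine congrFun (eq_of_sum_tmul_eq_sum_tmul hc
      (y := fun i ↦ comul (t i j)) (z := fun i ↦ ∑ l, t i l ⊗ₜ t l j) ?_) i
    have := coassoc_apply (R := k) (c j)
    simp only [ht, map_sum, LinearMap.rTensor_tmul, LinearMap.lTensor_tmul, TensorProduct.sum_tmul,
      TensorProduct.assoc_tmul] at this
    rw [← this, Finset.sum_comm]
    simp only [TensorProduct.tmul_sum]
  counit_apply i j := by
    refine congrFun (eq_of_sum_tmul_eq_sum_tmul hc
      (y := fun i ↦ counit (t i j)) (z := fun i ↦ (1 : Matrix n n k) i j) ?_) i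
    have := lTensor_counit_comul (R := k) (c j)
    simp only [ht, map_sum, LinearMap.lTensor_tmul] at this
    simp [this, Matrix.one_apply, TensorProduct.tmul_ite]

lemma exists_comul_eq_sum_tmul {V : Submodule k C} (b : Module.Basis n k V)
    (hV : ∀ φ, ∀ v ∈ V, dualAction k C φ v ∈ V) :
    ∃ t : Matrix n n C, ∀ j, comul (R := k) (b j : C) = ∑ i, (b i : C) ⊗ₜ t i j := by
  have hrange (j) : comul (R := k) (b j : C) ∈ LinearMap.range (V.subtype.rTensor C) :=
    mem_range_rTensor_subtype_of_forall_slice_mem fun φ ↦ hV (toConv φ) _ (b j).2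
  choose w hw using hrange
  choose t ht using fun j ↦ TensorProduct.eq_repr_basis_left b (w j)
  refine ⟨fun i j ↦ t j i, fun j ↦ ?_⟩
  rw [← hw, ← ht, Finsupp.sum_fintype _ _ (by simp), map_sum]
  rfl

lemma exists_dualAction_pow_apply_eq_zero {φ : WithConv (C →ₗ[k] k)}
    (hφ : ∀ (n : ℕ) (t : Matrix (Fin n) (Fin n) C), IsMultiplicativeMatrix k t →
      IsNilpotent (t.map φ.ofConv)) (a : C) :
    ∃ m, (dualAction k C φ ^ m) a = 0 := by
  have : Module.Finite k (dualOrbit k a) := .of_fg (fg_dualOrbit a)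
  let b := Module.finBasis k (dualOrbit k a)
  obtain ⟨t, ht⟩ := exists_comul_eq_sum_tmul b fun φ v ↦ dualAction_mem_dualOrbit φ
  have htmul : IsMultiplicativeMatrix k t :=
    .of_linearIndependent (b.linearIndependent.map' _ (Submodule.ker_subtype _)) ht
  obtain ⟨m, hm⟩ := hφ _ t htmul
  have hpow : t.map (φ ^ m).ofConv = 0 := (map_pow (htmul.evalAlgHom k) φ m).trans hm
  have hzero : dualAction k C (φ ^ m) ∘ₗ (dualOrbit k a).subtype = 0 := b.ext fun j ↦ by
    have hentry i : (φ ^ m).ofConv (t i j) = 0 := congr($hpow i j)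
    simp [-map_pow, dualAction_apply, ht, hentry]
  exact ⟨m, by simpa using congr($hzero ⟨a, self_mem_dualOrbit a⟩)⟩

end MultiplicativeMatrix

section Connected

lemma exists_isIdempotentElem_pow_dvd {R : Type*} [CommRing R] [IsArtinianRing R] (x : R) :
    ∃ n ≠ 0, ∃ e : R, IsIdempotentElem e ∧ x ^ n ∣ e ∧ e * x ^ n = x ^ n := by
  obtain ⟨n, y, hy⟩ := IsArtinian.exists_pow_succ_smul_dvd x (1 : R)
  simp only [smul_eq_mul, mul_one, Nat.succ_eq_add_one] at hy
  have hpow (j : ℕ) : x ^ (n + j) * y ^ j = x ^ n := by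
    induction j with
    | zero => simp
    | succ j ih => linear_combination ih + x ^ j * y ^ j * hy
  have hx : x ^ (n + 1) * y ^ (n + 1) * x ^ (n + 1) = x ^ (n + 1) := by
    linear_combination x * hpow (n + 1)
  refine ⟨n + 1, n.succ_ne_zero, x ^ (n + 1) * y ^ (n + 1), ?_, dvd_mul_right _ _, hx⟩
  rw [IsIdempotentElem, ← mul_assoc, hx]

open scoped IsMulCommutative in
lemma exists_isIdempotentElem_pow_dvd_of_isIntegral {k S : Type*} [CommRing k] [IsArtinianRing k]
    [Ring S] [Algebra k S] {u : S} (hu : IsIntegral k u) :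
    ∃ n ≠ 0, ∃ e : S, IsIdempotentElem e ∧ u ^ n ∣ e ∧ e * u ^ n = u ^ n := by
  have : Module.Finite k (Algebra.adjoin k {u}) := Algebra.finite_adjoin_simple_of_isIntegral hu
  have : IsArtinianRing (Algebra.adjoin k {u}) := .of_finite k _
  obtain ⟨n, hn, e, he, hdvd, heu⟩ := exists_isIdempotentElem_pow_dvd
    (⟨u, Algebra.self_mem_adjoin_singleton k u⟩ : Algebra.adjoin k {u})
  exact ⟨n, hn, e, congr($he.eq), map_dvd (Algebra.adjoin k {u}).val hdvd, congr(($heu : S))⟩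

variable {A K n : Type*} [CommRing A] [CommRing K] [Nontrivial K] [Fintype n]

lemma eq_zero_of_isIdempotentElem_of_map_eq_zero
    (hA : ∀ e : A, IsIdempotentElem e → e = 0 ∨ e = 1) (f : A →+* K) {e : Matrix n n A}
    (he : IsIdempotentElem e) (hfe : e.map f = 0) : e = 0 := by
  classical
  have hidem : IsIdempotentElem (1 - e).det := by
    rw [IsIdempotentElem, ← Matrix.det_mul, he.one_sub.eq]
  have hf : f (1 - e).det = 1 := by
    rw [f.map_det, map_sub, RingHom.mapMatrix_apply f e, hfe, map_one, sub_zero, Matrix.det_one]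
  have hdet : (1 - e).det = 1 := (hA _ hidem).resolve_left fun h ↦ by simp [h] at hf
  have hunit : IsUnit (1 - e) := (Matrix.isUnit_iff_isUnit_det _).2 (hdet ▸ isUnit_one)
  exact hunit.mul_left_cancel (by rw [he.one_sub_mul_self, mul_zero])

lemma isNilpotent_of_isIntegral_of_map_eq_zero {k : Type*} [CommRing k] [IsArtinianRing k]
    [Algebra k A] [DecidableEq n] (hA : ∀ e : A, IsIdempotentElem e → e = 0 ∨ e = 1) (f : A →+* K)
    {u : Matrix n n A} (hu : IsIntegral k u) (hfu : u.map f = 0) : IsNilpotent u := by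
  obtain ⟨m, hm, e, he, hdvd, heu⟩ := exists_isIdempotentElem_pow_dvd_of_isIntegral hu
  have hfe : f.mapMatrix e = 0 := by
    have := map_dvd f.mapMatrix hdvd
    rwa [map_pow, RingHom.mapMatrix_apply, hfu, zero_pow hm, zero_dvd_iff] at this
  have he0 := eq_zero_of_isIdempotentElem_of_map_eq_zero hA f he hfe
  exact ⟨m, by rw [← heu, he0, zero_mul]⟩

end Connected

section LocallyNilpotent

lemma map_lt_of_forall_exists_pow_eq_zero {R M : Type*} [CommRing R] [AddCommGroup M] [Module R M]
    {f : Module.End R M} (hf : ∀ x, ∃ m, (f ^ m) x = 0) {V : Submodule R M} [Module.Finite R V]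
    (hV : V ≠ ⊥) (hfV : V.map f ≤ V) : V.map f < V := by
  refine hfV.lt_of_ne fun h ↦ hV ?_
  have hmaps : ∀ v ∈ V, f v ∈ V := Submodule.map_le_iff_le_comap.1 hfV
  have hnil : IsNilpotent (f.restrict hmaps) := by
    refine Module.End.isNilpotent_iff_of_finite.2 fun v ↦ ?_
    obtain ⟨m, hm⟩ := hf v
    exact ⟨m, by rw [Module.End.pow_restrict]; exact Subtype.ext hm⟩
  have hsurj : Function.Surjective (f.restrict hmaps) := by
    rintro ⟨v, hv⟩
    obtain ⟨w, hw, rfl⟩ := h.ge hv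
    exact ⟨⟨w, hw⟩, rfl⟩
  obtain ⟨m, hm⟩ := hnil
  refine (Submodule.eq_bot_iff V).2 fun v hv ↦ ?_
  obtain ⟨w, hw⟩ := (Module.End.coe_pow (f.restrict hmaps) m ▸ hsurj.iterate m) ⟨v, hv⟩
  rw [hm, LinearMap.zero_apply] at hw
  exact congr(Subtype.val $hw.symm)

lemma exists_notMem_forall_apply_mem {k M : Type*} [Field k] [AddCommGroup M] [Module k M]
    {N : Set (Module.End k M)} (hcomm : ∀ f ∈ N, ∀ g ∈ N, Commute f g)
    (hnil : ∀ f ∈ N, ∀ x, ∃ m, (f ^ m) x = 0)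
    {J V : Submodule k M} [Module.Finite k V] (hV : ∀ f ∈ N, V.map f ≤ V) (hVJ : ¬ V ≤ J) :
    ∃ x ∉ J, ∀ f ∈ N, f x ∈ J := by
  induction hd : Module.finrank k V using Nat.strong_induction_on generalizing V with | _ d ih
  by_cases hle : ∀ f ∈ N, V.map f ≤ J
  · obtain ⟨x, hxV, hxJ⟩ := Set.not_subset.1 hVJ
    exact ⟨x, hxJ, fun f hf ↦ hle f hf ⟨x, hxV, rfl⟩⟩
  · push Not at hle
    obtain ⟨f, hf, hfJ⟩ := hle
    have hlt : V.map f < V := map_lt_of_forall_exists_pow_eq_zero (hnil f hf)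
      (by rintro rfl; exact hVJ bot_le) (hV f hf)
    refine ih _ (hd ▸ Submodule.finrank_lt_finrank_of_lt hlt) (fun g hg ↦ ?_) hfJ rfl
    rw [← Submodule.map_comp, ← Module.End.mul_eq_comp, (hcomm g hg f hf).eq,
      Module.End.mul_eq_comp, Submodule.map_comp]
    exact Submodule.map_mono (hV g hg)

end LocallyNilpotent

section ConvolutionHom

variable {k C A n : Type*} [CommRing k] [AddCommGroup C] [Module k C] [Coalgebra k C] [CommRing A]
  [Algebra k A] [Fintype n] [DecidableEq n] {t : Matrix n n C}

lemma isIntegral_evalAlgHom [IsNoetherianRing k] (ht : IsMultiplicativeMatrix k t)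
    {μ : WithConv (C →ₗ[k] k) →ₐ[k] WithConv (C →ₗ[k] A)}
    (hμ : ∀ c, ∃ W : Submodule k A, W.FG ∧ ∀ φ, (μ φ).ofConv c ∈ W) (φ : WithConv (C →ₗ[k] k)) :
    IsIntegral k (ht.evalAlgHom A (μ φ)) := by
  choose W hWfg hW using hμ
  let 𝓡 := ((ht.evalAlgHom A).comp μ).range
  have hmem (x : 𝓡) (p : n × n) : x.1 p.1 p.2 ∈ W (t p.1 p.2) := by
    obtain ⟨_, ψ, rfl⟩ := x
    exact hW (t p.1 p.2) ψ
  have (p : n × n) : Module.Finite k (W (t p.1 p.2)) := .of_fg (hWfg _)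
  let entries : 𝓡 →ₗ[k] ∀ p : n × n, W (t p.1 p.2) := LinearMap.pi fun p ↦
    (Matrix.entryLinearMap k A p.1 p.2 ∘ₗ 𝓡.val.toLinearMap).codRestrict _ fun x ↦ hmem x p
  have hentries : Function.Injective entries := fun x y hxy ↦
    Subtype.ext <| Matrix.ext fun i j ↦ congr(($(congrFun hxy (i, j)) : A))
  have : Module.Finite k 𝓡 := .of_injective entries hentries
  exact (IsIntegral.of_finite k (⟨_, φ, rfl⟩ : 𝓡)).map 𝓡.val

lemma isNilpotent_map_of_forall_map_eq_zero {K : Type*} [IsArtinianRing k] [CommRing K]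
    [Nontrivial K] (ht : IsMultiplicativeMatrix k t)
    {μ : WithConv (C →ₗ[k] k) →ₐ[k] WithConv (C →ₗ[k] A)}
    (hμ : ∀ c, ∃ W : Submodule k A, W.FG ∧ ∀ φ, (μ φ).ofConv c ∈ W)
    (hA : ∀ e : A, IsIdempotentElem e → e = 0 ∨ e = 1) (f : A →+* K)
    {φ : WithConv (C →ₗ[k] k)} (hφ : ∀ c, f ((μ φ).ofConv c) = 0) :
    IsNilpotent (t.map (μ φ).ofConv) :=
  isNilpotent_of_isIntegral_of_map_eq_zero hA f (isIntegral_evalAlgHom ht hμ φ)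
    (Matrix.ext fun i j ↦ hφ (t i j))

end ConvolutionHom

section PtOp

open Algebra.TensorProduct

variable {k A R S : Type} [Field k] [CommRing A] [Algebra k A] [CommRing R] [Algebra k R]
  [CommRing S] [Algebra k S] (Δ : A →ₐ[k] A ⊗[k] A)

lemma ptOp_eq_productMap_comp (f g : A →ₐ[k] R) : ptOp k A Δ f g = (productMap f g).comp Δ := by
  rw [ptOp, ← AlgHom.comp_assoc, productMap_eq_comp_map]

lemma comp_eq_ptOp (h : A ⊗[k] A →ₐ[k] R) :
    h.comp Δ = ptOp k A Δ (h.comp includeLeft) (h.comp includeRight) := by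
  have : productMap (h.comp includeLeft) (h.comp includeRight) = h := by
    ext <;> simp [← one_def]
  rw [ptOp_eq_productMap_comp, this]

lemma comp_ptOp (h : R →ₐ[k] S) (f g : A →ₐ[k] R) :
    h.comp (ptOp k A Δ f g) = ptOp k A Δ (h.comp f) (h.comp g) := by
  rw [ptOp_eq_productMap_comp, ← AlgHom.comp_assoc, comp_eq_ptOp, AlgHom.comp_assoc,
    AlgHom.comp_assoc, productMap_left, productMap_right]

lemma rTensor_apply_eq_one_tmul_ptOp (ε : A →ₐ[k] k) (a : A) :
    ε.toLinearMap.rTensor A (Δ a) = 1 ⊗ₜ ptOp k A Δ (ptConst k A ε) (AlgHom.id k A) a := by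
  have : includeRight.comp (productMap (ptConst k A ε) (AlgHom.id k A)) =
      map ε (AlgHom.id k A) := by
    ext x
    · simp [ptConst, Algebra.ofId_apply, Algebra.algebraMap_eq_smul_one, TensorProduct.smul_tmul']
    · simp
  rw [ptOp_eq_productMap_comp]
  exact congr($this.symm (Δ a))

lemma lTensor_apply_eq_ptOp_tmul_one (ε : A →ₐ[k] k) (a : A) :
    ε.toLinearMap.lTensor A (Δ a) = ptOp k A Δ (AlgHom.id k A) (ptConst k A ε) a ⊗ₜ 1 := by
  have : includeLeft.comp (productMap (AlgHom.id k A) (ptConst k A ε)) =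
      map (AlgHom.id k A) ε := by
    ext x
    · simp
    · simp [ptConst, Algebra.ofId_apply, Algebra.algebraMap_eq_smul_one, ← TensorProduct.tmul_smul]
  rw [ptOp_eq_productMap_comp]
  exact congr($this.symm (Δ a))

lemma map_comp_eq_ptOp (f : A →ₐ[k] R) (g : A →ₐ[k] S) :
    (map f g).comp Δ = ptOp k A Δ (includeLeft.comp f) (includeRight.comp g) := by
  rw [comp_eq_ptOp, map_comp_includeLeft, map_comp_includeRight]

lemma coassoc_of_ptOp_assoc
    (h : ∀ (R : Type) [CommRing R] [Algebra k R] (f g h : A →ₐ[k] R),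
      ptOp k A Δ (ptOp k A Δ f g) h = ptOp k A Δ f (ptOp k A Δ g h)) :
    (Algebra.TensorProduct.assoc k k k A A A).toAlgHom.comp ((map Δ (AlgHom.id k A)).comp Δ) =
      (map (AlgHom.id k A) Δ).comp Δ := by
  let α := (Algebra.TensorProduct.assoc k k k A A A).toAlgHom
  have hα₁ : (α.comp includeLeft).comp includeLeft = includeLeft := rfl
  have hα₂ : (α.comp includeLeft).comp includeRight = includeRight.comp includeLeft := rfl
  have hα₃ : α.comp includeRight = includeRight.comp includeRight := rfl
  calc α.comp ((map Δ (AlgHom.id k A)).comp Δ)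
    _ = ptOp k A Δ ((α.comp includeLeft).comp Δ) (α.comp includeRight) := by
      rw [map_comp_eq_ptOp, comp_ptOp, AlgHom.comp_id, AlgHom.comp_assoc]
    _ = ptOp k A Δ includeLeft
          (ptOp k A Δ (includeRight.comp includeLeft) (includeRight.comp includeRight)) := by
      rw [comp_eq_ptOp Δ (α.comp includeLeft), hα₁, hα₂, hα₃, h]
    _ = (map (AlgHom.id k A) Δ).comp Δ := by
      rw [map_comp_eq_ptOp, AlgHom.comp_id, ← comp_eq_ptOp]

lemma slice_map_includeLeft_mul_map_includeRight (φ ψ : A →ₗ[k] k) (y z : R ⊗[k] A) :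
    slice (LinearMap.mul' k k ∘ₗ TensorProduct.map φ ψ)
        (map (AlgHom.id k R) includeLeft y * map (AlgHom.id k R) includeRight z) =
      slice φ y * slice ψ z := by
  induction y with
  | zero => simp
  | add y₁ y₂ hy₁ hy₂ => simp only [map_add, add_mul, hy₁, hy₂]
  | tmul a b =>
    induction z with
    | zero => simp
    | add z₁ z₂ hz₁ hz₂ => simp only [map_add, mul_add, hz₁, hz₂]
    | tmul c d => simp [smul_smul, mul_comm]

end PtOp

namespace Biring

open Algebra.TensorProduct Coalgebra

variable {k A : Type} [Field k] [CommRing A] [Algebra k A] (B : Biring k A)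

lemma ptOp_comul_zero {R : Type} [CommRing R] [Algebra k R] (f : A →ₐ[k] R) :
    ptOp k A B.comul f (ptConst k A B.counitAdd) = ptConst k A B.counitAdd := by
  set z : A →ₐ[k] R := ptConst k A B.counitAdd
  set w := ptOp k A B.comul f z with hw
  have hww : ptOp k A B.coadd w w = w := by rw [hw, ← B.pt_mul_add, B.pt_zero_add]
  calc w = ptOp k A B.coadd w (ptOp k A B.coadd w (w.comp B.antipode)) := by
        rw [B.pt_add_neg, B.pt_add_comm, B.pt_zero_add]
    _ = z := by rw [← B.pt_add_assoc, hww, B.pt_add_neg]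

/-- The coalgebra of the additive group of a ring scheme. It is not an instance, since `Δ×` gives
another coalgebra structure on `A`. -/
abbrev toCoalgebra : Coalgebra k A where
  comul := B.coadd.toLinearMap
  counit := B.counitAdd.toLinearMap
  coassoc := congr(AlgHom.toLinearMap $(coassoc_of_ptOp_assoc B.coadd B.pt_add_assoc))
  rTensor_counit_comp_comul := LinearMap.ext fun a ↦ by
    simpa [B.pt_zero_add] using rTensor_apply_eq_one_tmul_ptOp B.coadd B.counitAdd a
  lTensor_counit_comp_comul := LinearMap.ext fun a ↦ by
    simpa [B.pt_add_comm _ (AlgHom.id k A), B.pt_zero_add] using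
      lTensor_apply_eq_ptOp_tmul_one B.coadd B.counitAdd a

lemma isCocomm_toCoalgebra :
    let := B.toCoalgebra
    Coalgebra.IsCocomm k A := by
  let := B.toCoalgebra
  have hcomm : productMap includeRight includeLeft =
      (Algebra.TensorProduct.comm k A A).toAlgHom := by ext <;> simp
  have hid : productMap includeLeft includeRight = AlgHom.id k (A ⊗[k] A) := by
    ext <;> simp [← one_def]
  have : (Algebra.TensorProduct.comm k A A).toAlgHom.comp B.coadd = B.coadd := by
    rw [← hcomm, ← ptOp_eq_productMap_comp, B.pt_add_comm, ptOp_eq_productMap_comp, hid,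
      AlgHom.id_comp]
  exact ⟨congr(AlgHom.toLinearMap $this)⟩

lemma slice_counitAdd_comul (a : A) :
    slice B.counitAdd.toLinearMap (B.comul a) = algebraMap k A (B.counitAdd a) := by
  change TensorProduct.rid k A (B.counitAdd.toLinearMap.lTensor A (B.comul a)) = _
  rw [lTensor_apply_eq_ptOp_tmul_one, B.ptOp_comul_zero, TensorProduct.rid_tmul, one_smul]
  rfl

lemma map_coadd_comp_comul : (map (AlgHom.id k A) B.coadd).comp B.comul =
    ptOp k A B.coadd ((map (AlgHom.id k A) includeLeft).comp B.comul)
      ((map (AlgHom.id k A) includeRight).comp B.comul) := by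
  simp only [map_comp_eq_ptOp, AlgHom.comp_id]
  rw [← B.pt_mul_add, ← comp_eq_ptOp]

lemma slice_conv_comul (φ ψ : A →ₗ[k] k) (a : A) :
    slice ((LinearMap.mul' k k ∘ₗ TensorProduct.map φ ψ) ∘ₗ B.coadd.toLinearMap) (B.comul a) =
      LinearMap.mul' k A (TensorProduct.map (slice φ ∘ₗ B.comul.toLinearMap)
        (slice ψ ∘ₗ B.comul.toLinearMap) (B.coadd a)) := by
  rw [slice_comp]
  change slice _ ((map (AlgHom.id k A) B.coadd).comp B.comul a) = _
  rw [map_coadd_comp_comul, ptOp_eq_productMap_comp, AlgHom.comp_apply]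
  induction B.coadd a with
  | zero => simp
  | add y z hy hz => simp only [map_add, hy, hz]
  | tmul x y => simp [slice_map_includeLeft_mul_map_includeRight]

/-- Multiplication by a functional, `φ ↦ (id ⊗ φ) ∘ Δ×`. For the convolution products coming from
`Δ⁺` it is multiplicative because multiplication distributes over addition. -/
noncomputable def mulSlice :
    let := B.toCoalgebra
    WithConv (A →ₗ[k] k) →ₐ[k] WithConv (A →ₗ[k] A) :=
  let := B.toCoalgebra
  AlgHom.ofLinearMap
    ((WithConv.linearEquiv k _).symm.toLinearMap ∘ₗ B.comul.toLinearMap.lcomp k A ∘ₗ slice ∘ₗ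
      (WithConv.linearEquiv k _).toLinearMap)
    (congr(toConv $(LinearMap.ext B.slice_counitAdd_comul)))
    (fun φ ψ ↦ WithConv.ext <| LinearMap.ext <| B.slice_conv_comul φ.ofConv ψ.ofConv)

lemma mulSlice_apply (φ : A →ₗ[k] k) (a : A) :
    (B.mulSlice (toConv φ)).ofConv a = slice φ (B.comul a) := rfl

lemma counitMul_mulSlice (φ : A →ₗ[k] k) (a : A) :
    B.counitMul ((B.mulSlice (toConv φ)).ofConv a) = φ a := by
  rw [mulSlice_apply, ← AlgHom.toLinearMap_apply, ← slice_rTensor, rTensor_apply_eq_one_tmul_ptOp,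
    B.pt_one_mul, slice_tmul, AlgHom.id_apply, smul_eq_mul, mul_one]

lemma counitAdd_mulSlice (φ : A →ₗ[k] k) (a : A) :
    B.counitAdd ((B.mulSlice (toConv φ)).ofConv a) = B.counitAdd a * φ 1 := by
  rw [mulSlice_apply, ← AlgHom.toLinearMap_apply, ← slice_rTensor, rTensor_apply_eq_one_tmul_ptOp,
    B.pt_mul_comm, B.ptOp_comul_zero, slice_tmul]
  simp [ptConst, Algebra.ofId_apply, Algebra.algebraMap_eq_smul_one]

lemma isNilpotent_map_of_apply_one_eq_zero (hA : ∀ e : A, IsIdempotentElem e → e = 0 ∨ e = 1)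
    {φ : A →ₗ[k] k} (hφ : φ 1 = 0) {n : Type*} [Fintype n] [DecidableEq n] {t : Matrix n n A}
    (ht : let := B.toCoalgebra; IsMultiplicativeMatrix k t) : IsNilpotent (t.map φ) := by
  let := B.toCoalgebra
  have hnil : IsNilpotent (t.map (B.mulSlice (toConv φ)).ofConv) :=
    isNilpotent_map_of_forall_map_eq_zero ht
      (fun a ↦ (exists_fg_forall_slice_mem (B.comul a)).imp fun _ h ↦ ⟨h.1, fun φ ↦ h.2 φ.ofConv⟩)
      hA B.counitAdd.toRingHom fun a ↦ (B.counitAdd_mulSlice φ a).trans (by rw [hφ, mul_zero])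
  have heval : (t.map (B.mulSlice (toConv φ)).ofConv).map B.counitMul = t.map φ :=
    Matrix.ext fun i j ↦ B.counitMul_mulSlice φ (t i j)
  exact heval ▸ hnil.map B.counitMul.toRingHom.mapMatrix

lemma exists_dualAction_pow_apply_eq_zero_of_apply_one_eq_zero
    (hA : ∀ e : A, IsIdempotentElem e → e = 0 ∨ e = 1) {φ : A →ₗ[k] k} (hφ : φ 1 = 0) (a : A) :
    let := B.toCoalgebra
    ∃ m, (dualAction k A (toConv φ) ^ m) a = 0 := by
  let := B.toCoalgebra
  exact exists_dualAction_pow_apply_eq_zero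
    (fun _ _ ht ↦ B.isNilpotent_map_of_apply_one_eq_zero hA hφ ht) a

lemma exists_notMem_forall_dualAction_mem (hA : ∀ e : A, IsIdempotentElem e → e = 0 ∨ e = 1)
    {J : Submodule k A} {x : A} (hx : x ∉ J) :
    let := B.toCoalgebra
    ∃ y ∉ J, ∀ φ : A →ₗ[k] k, φ 1 = 0 → dualAction k A (toConv φ) y ∈ J := by
  let := B.toCoalgebra
  have : IsCocomm k A := B.isCocomm_toCoalgebra
  have : Module.Finite k (dualOrbit k x) := .of_fg (fg_dualOrbit x)
  let N : Set (Module.End k A) := {f | ∃ φ : A →ₗ[k] k, φ 1 = 0 ∧ dualAction k A (toConv φ) = f}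
  have hcomm : ∀ f ∈ N, ∀ g ∈ N, Commute f g := by
    rintro _ ⟨φ, -, rfl⟩ _ ⟨ψ, -, rfl⟩
    exact (Commute.all _ _).map (dualAction k A)
  have hnil : ∀ f ∈ N, ∀ a, ∃ m, (f ^ m) a = 0 := by
    rintro _ ⟨φ, hφ, rfl⟩
    exact B.exists_dualAction_pow_apply_eq_zero_of_apply_one_eq_zero hA hφ
  have horbit : ∀ f ∈ N, (dualOrbit k x).map f ≤ dualOrbit k x := by
    rintro _ ⟨φ, -, rfl⟩
    exact Submodule.map_le_iff_le_comap.2 fun v ↦ dualAction_mem_dualOrbit _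
  obtain ⟨y, hyJ, hy⟩ := exists_notMem_forall_apply_mem hcomm hnil horbit
    fun h ↦ hx (h (self_mem_dualOrbit x))
  exact ⟨y, hyJ, fun φ hφ ↦ hy _ ⟨φ, hφ, rfl⟩⟩

lemma dualAction_algebraMap (φ : A →ₗ[k] k) (r : k) :
    let := B.toCoalgebra
    dualAction k A (toConv φ) (algebraMap k A r) = algebraMap k A (r * φ 1) := by
  change slice φ (B.coadd (algebraMap k A r)) = _
  rw [AlgHom.commutes, Algebra.algebraMap_eq_smul_one, one_def, map_smul, slice_tmul, smul_smul,
    ← Algebra.algebraMap_eq_smul_one]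

end Biring

section Primitive

open Coalgebra

variable {k A : Type} [Field k] [CommRing A] [Algebra k A] {I : Ideal A}

lemma mem_sideIdeal_of_forall_slice_mem {z : A ⊗[k] A} (hz : ∀ φ : A →ₗ[k] k, slice φ z ∈ I) :
    z ∈ sideIdeal k A I := by
  obtain ⟨w, rfl⟩ := mem_range_rTensor_subtype_of_forall_slice_mem (V := I.restrictScalars k) hz
  clear hz
  induction w with
  | zero => simp
  | add w₁ w₂ h₁ h₂ => rw [map_add]; exact add_mem h₁ h₂
  | tmul i a => exact Submodule.subset_span ⟨i, i.2, a, .inl rfl⟩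

variable (B : Biring k A)

lemma coadd_sub_tmul_one_sub_one_tmul_mem_sideIdeal {x : A} (hx : B.counitAdd x = 0)
    (hxI : let := B.toCoalgebra; ∀ φ : A →ₗ[k] k, φ 1 = 0 →
      dualAction k A (toConv φ) x - algebraMap k A (φ x) ∈ I) :
    B.coadd x - x ⊗ₜ 1 - 1 ⊗ₜ x ∈ sideIdeal k A I := by
  let := B.toCoalgebra
  refine mem_sideIdeal_of_forall_slice_mem fun φ ↦ ?_
  let φ₀ : A →ₗ[k] k := φ - φ 1 • B.counitAdd.toLinearMap
  have hφ₀ : dualAction k A (toConv φ₀) x = slice φ (B.coadd x) - φ 1 • x := by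
    have hcounit : slice B.counitAdd.toLinearMap (B.coadd x) = x :=
      congr($(map_one (dualAction k A)) x)
    change slice φ₀ (B.coadd x) = _
    rw [map_sub, map_smul, LinearMap.sub_apply, LinearMap.smul_apply, hcounit]
  have hφ₀x : φ₀ x = φ x := by simp [φ₀, hx]
  have := hxI φ₀ (by simp [φ₀])
  rwa [hφ₀, hφ₀x, Algebra.algebraMap_eq_smul_one, ← slice_tmul φ x 1, ← slice_tmul φ 1 x,
    ← map_sub, ← map_sub] at this

theorem connected_finiteType_ring_scheme_unipotent_general
    (hconn : ∀ e : A, IsIdempotentElem e → e = 0 ∨ e = 1)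
    (hI : ¬ RingHom.ker B.counitAdd ≤ I) :
    ∃ x ∉ I, B.coadd x - x ⊗ₜ[k] (1 : A) - (1 : A) ⊗ₜ[k] x ∈ sideIdeal k A I := by
  let := B.toCoalgebra
  let J : Submodule k A := (I.restrictScalars k).comap
    (LinearMap.id - Algebra.linearMap k A ∘ₗ B.counitAdd.toLinearMap)
  have mem_J (a : A) : a ∈ J ↔ a - algebraMap k A (B.counitAdd a) ∈ I := Iff.rfl
  obtain ⟨x, hx, hxI⟩ := SetLike.not_le_iff_exists.1 hI
  have hxJ : x ∉ J := by rwa [mem_J, RingHom.mem_ker.1 hx, map_zero, sub_zero]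
  obtain ⟨y, hyJ, hy⟩ := B.exists_notMem_forall_dualAction_mem hconn hxJ
  refine ⟨y - algebraMap k A (B.counitAdd y), hyJ,
    coadd_sub_tmul_one_sub_one_tmul_mem_sideIdeal B (by simp) fun φ hφ ↦ ?_⟩
  have hact : dualAction k A (toConv φ) (y - algebraMap k A (B.counitAdd y)) =
      dualAction k A (toConv φ) y := by
    rw [map_sub, B.dualAction_algebraMap, hφ, mul_zero, map_zero, sub_zero]
  have hval : φ (y - algebraMap k A (B.counitAdd y)) =
      B.counitAdd (dualAction k A (toConv φ) y) := by
    rw [← hact]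
    exact (counit_dualAction_apply (toConv φ) _).symm
  rw [hact, hval]
  exact hy φ hφ

end Primitive

/-- **Theorem 2.6**: over a field, every connected ring scheme of finite type is unipotent:
for every Hopf ideal `I ≠ ker ε⁺` of a connected `k`-biring `A` of finite type, the quotient
Hopf algebra `A/I` has a nonzero primitive element. -/
theorem connected_finiteType_ring_scheme_unipotent
    (k A : Type) [Field k] [CommRing A] [Algebra k A] (B : Biring k A)
    (hft : Algebra.FiniteType k A)
    (hconn : ∀ e : A, e * e = e → e = 0 ∨ e = 1)
    (I : Ideal A)
    (hIcounit : ∀ a ∈ I, B.counitAdd a = 0)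
    (hIantipode : ∀ a ∈ I, B.antipode a ∈ I)
    (hIcoadd : ∀ a ∈ I, B.coadd a ∈ sideIdeal k A I)
    (hIne : I ≠ RingHom.ker B.counitAdd) :
    ∃ x : A, x ∉ I ∧
      B.coadd x - x ⊗ₜ[k] (1 : A) - (1 : A) ⊗ₜ[k] x ∈ sideIdeal k A I :=
  connected_finiteType_ring_scheme_unipotent_general B hconn fun h ↦
    hIne (le_antisymm hIcounit h)
end
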